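/- There exists a constant C > 0 such that for every real x ≥ 1, the number of pairs (I, J) of nonzero ideals of ℤ[i] with N(I) ≤ x and N(J) ≤ x that are coprime (i.e. I ⊔ J = ⊤) differs from π²x²/(16·ζ_{ℚ(i)}(2)) by at most C·x^(4/3). -/

import Mathlib

open Real

/-- The absolute norm of an ideal of `ℤ[i]`: the cardinality of the quotient ring. -/
noncomputable def normI (I : Ideal GaussianInt) : ℕ := Nat.card (GaussianInt ⧸ I)

/-- `P x` : pairs of nonzero ideals of `ℤ[i]` with both norms at most `x`. -/
noncomputable def P (x : ℝ) : Set (Ideal GaussianInt × Ideal GaussianInt) :=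
  {p | p.1 ≠ ⊥ ∧ p.2 ≠ ⊥ ∧ (normI p.1 : ℝ) ≤ x ∧ (normI p.2 : ℝ) ≤ x}

/-- `ζ_{ℚ(i)}(2)`, the sum of `1/N(I)²` over nonzero ideals of `ℤ[i]`. -/
noncomputable def zetaQi2 : ℝ := ∑' I : {I : Ideal GaussianInt // I ≠ ⊥}, 1 / (normI I.1 : ℝ) ^ 2

/-!
Let `A y` be the number of nonzero ideals of norm at most `y`. Möbius inversion over ideals writes
the number of coprime pairs as `∑ d, μ d * A (x / N d) ^ 2`. If `A y = π / 4 * y + O(y ^ θ)`, then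
replacing `A y` by `π / 4 * y` produces the main term, because `∑ d, μ d / N d ^ 2` is the inverse
of the zeta value at `2`, at the cost of an error `O(x ^ (1 + θ) * ∑ d, 1 / N d ^ (1 + θ))`. All
nonzero `d` may be included in the sum, since `y ^ 2 ≤ y ^ (1 + θ)` when `y = x / N d < 1`.

Every nonzero ideal of `ℤ[i]` has exactly one generator `a + b i` with `0 < a` and `0 ≤ b`, so `A y`
counts lattice points in a quarter disc, and the exponent `θ = 1 / 3` is the theorem of Voronoi and
Sierpiński on the circle problem. Cutting the quarter disc along its diagonal leaves the sum of
`ψ (√(y - n ^ 2))` over `0 ≤ n ≤ √(y / 2)`, where `ψ` is the sawtooth function. An integral of `ψ`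
is a Bernoulli function, whose Fourier series converges absolutely, and `ψ` is sandwiched, up to the
step length, between difference quotients of it. The resulting exponential sums are bounded by van
der Corput's second-derivative test, that is, by the Kusmin–Landau inequality away from the points
where the derivative of the phase is close to an integer.
-/

open scoped FourierTransform

lemma fourierChar_ne_one_of_mem_Ioo {d : ℝ} (hd : d ∈ Set.Ioo 0 1) : (𝐞 d : ℂ) ≠ 1 := by
  rw [fourierChar_apply, Ne, Complex.exp_eq_one_iff]
  rintro ⟨n, hn⟩
  have hdn : d = n := by
    have : ((2 * π * d : ℝ) : ℂ) = ((2 * π * n : ℝ) : ℂ) :=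
      mul_right_cancel₀ Complex.I_ne_zero (by rw [hn]; push_cast; ring)
    exact mul_left_cancel₀ two_pi_pos.ne' (Complex.ofReal_injective this)
  rw [hdn, Set.mem_Ioo] at hd
  norm_cast at hd
  lia

lemma inv_one_sub_fourierChar {d : ℝ} (hd : d ∈ Set.Ioo 0 1) :
    (1 - (𝐞 d : ℂ))⁻¹ = 1 / 2 + Complex.I / 2 * cot (π * d) := by
  have hd1 : 1 - (𝐞 d : ℂ) ≠ 0 := sub_ne_zero.2 (fourierChar_ne_one_of_mem_Ioo hd).symm
  have hcot : (cot (π * d) : ℂ) = (𝐞 d + 1) / (Complex.I * (1 - 𝐞 d)) := by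
    have he : (𝐞 d : ℂ) = Complex.exp (2 * π * Complex.I * d) := by
      rw [fourierChar_apply]; push_cast; ring_nf
    rw [he, ← Complex.cot_pi_eq_exp_ratio]; push_cast; rfl
  rw [hcot]
  field_simp
  ring

lemma two_mul_le_sin_pi_mul {d δ : ℝ} (hδ : 0 ≤ δ) (hd : d ∈ Set.Icc δ (1 - δ)) :
    2 * δ ≤ sin (π * d) := by
  wlog h : d ≤ 1 / 2 generalizing d
  · rw [← sin_pi_sub, ← mul_one_sub]
    exact this ⟨by linarith [hd.2], by linarith [hd.1]⟩ (by linarith)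
  · have hsin := mul_le_sin (x := π * d) (by nlinarith [pi_pos, hd.1]) (by nlinarith [pi_pos])
    rw [← mul_assoc, div_mul_cancel₀ _ pi_ne_zero] at hsin
    linarith [hd.1]

lemma sin_pi_mul_pos {d : ℝ} (hd : d ∈ Set.Ioo 0 1) : 0 < sin (π * d) :=
  sin_pos_of_mem_Ioo ⟨by nlinarith [pi_pos, hd.1], by nlinarith [pi_pos, hd.2]⟩

lemma abs_cot_pi_mul_le {d δ : ℝ} (hδ : 0 < δ) (hd : d ∈ Set.Icc δ (1 - δ)) :
    |cot (π * d)| ≤ 1 / (2 * δ) := by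
  have hsin := two_mul_le_sin_pi_mul hδ.le hd
  rw [cot_eq_cos_div_sin, abs_div, abs_of_pos (a := sin (π * d)) (by linarith)]
  gcongr
  exact abs_cos_le_one _

lemma cot_pi_mul_antitoneOn : AntitoneOn (fun d : ℝ ↦ cot (π * d)) (Set.Ioo 0 1) := by
  intro a ha b hb hab
  have hsin : 0 ≤ sin (π * b - π * a) := sin_nonneg_of_nonneg_of_le_pi
    (by nlinarith [pi_pos]) (by nlinarith [pi_pos, ha.1, hb.2])
  rw [sin_sub] at hsin
  simp only [cot_eq_cos_div_sin]
  rw [div_le_div_iff₀ (sin_pi_mul_pos hb) (sin_pi_mul_pos ha)]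
  linarith

lemma norm_inv_one_sub_fourierChar_le {d δ : ℝ} (hδ : 0 < δ) (hd : d ∈ Set.Icc δ (1 - δ)) :
    ‖(1 - (𝐞 d : ℂ))⁻¹‖ ≤ 1 / 2 + 1 / (4 * δ) := by
  rw [inv_one_sub_fourierChar ⟨by linarith [hd.1], by linarith [hd.2]⟩]
  calc ‖1 / 2 + Complex.I / 2 * (cot (π * d) : ℂ)‖
      ≤ 1 / 2 + 1 / 2 * |cot (π * d)| := by
        refine (norm_add_le _ _).trans_eq ?_
        rw [norm_mul, Complex.norm_real, norm_eq_abs]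
        simp
    _ ≤ 1 / 2 + 1 / 2 * (1 / (2 * δ)) := by gcongr; exact abs_cot_pi_mul_le hδ hd
    _ = 1 / 2 + 1 / (4 * δ) := by ring

lemma norm_inv_one_sub_fourierChar_sub {a b : ℝ} (ha : 0 < a) (hab : a ≤ b) (hb : b < 1) :
    ‖(1 - (𝐞 a : ℂ))⁻¹ - (1 - (𝐞 b : ℂ))⁻¹‖ = (cot (π * a) - cot (π * b)) / 2 := by
  have ha' : a ∈ Set.Ioo 0 1 := ⟨ha, by linarith⟩
  have hb' : b ∈ Set.Ioo 0 1 := ⟨by linarith, hb⟩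
  have hcot : 0 ≤ cot (π * a) - cot (π * b) := sub_nonneg.2 (cot_pi_mul_antitoneOn ha' hb' hab)
  rw [inv_one_sub_fourierChar ha', inv_one_sub_fourierChar hb',
    add_sub_add_left_eq_sub, ← mul_sub, ← Complex.ofReal_sub, norm_mul, Complex.norm_real,
    norm_of_nonneg hcot]
  simp
  ring

lemma fourierChar_eq_sub_mul_inv {s t : ℝ} (h : t - s ∈ Set.Ioo 0 1) :
    (𝐞 s : ℂ) = (𝐞 s - 𝐞 t) * (1 - (𝐞 (t - s) : ℂ))⁻¹ := by
  have ht : (𝐞 t : ℂ) = 𝐞 s * 𝐞 (t - s) := by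
    rw [← Circle.coe_mul, ← AddChar.map_add_eq_mul, add_sub_cancel]
  rw [ht, ← mul_one_sub, mul_assoc,
    mul_inv_cancel₀ (sub_ne_zero.2 (fourierChar_ne_one_of_mem_Ioo h).symm), mul_one]

/- Summation by parts: each term is a difference times a kernel `(1 - 𝐞 d)⁻¹`, and the total
variation of the kernel telescopes since the `d` are monotone. -/
lemma norm_sum_fourierChar_add_le {φ : ℕ → ℝ} (N : ℕ)
    (hd : ∀ n ≤ N, φ (n + 1) - φ n ∈ Set.Ioo 0 1)
    (hanti : ∀ n < N, φ (n + 2) - φ (n + 1) ≤ φ (n + 1) - φ n) :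
    ‖∑ n ∈ Finset.range (N + 1), (𝐞 (φ n) : ℂ)
        + 𝐞 (φ (N + 1)) * (1 - (𝐞 (φ (N + 1) - φ N) : ℂ))⁻¹‖
      ≤ ‖(1 - (𝐞 (φ 1 - φ 0) : ℂ))⁻¹‖
        + (cot (π * (φ (N + 1) - φ N)) - cot (π * (φ 1 - φ 0))) / 2 := by
  induction N with
  | zero =>
    rw [zero_add, Finset.sum_range_one, sub_self, zero_div, add_zero]
    nth_rw 1 [fourierChar_eq_sub_mul_inv (hd 0 le_rfl)]
    rw [← add_mul, sub_add_cancel, norm_mul, Circle.norm_coe, one_mul]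
  | succ N ih =>
    have ih' := ih (fun n hn ↦ hd n (by lia)) fun n hn ↦ hanti n (by lia)
    have hvar := norm_inv_one_sub_fourierChar_sub (hd (N + 1) le_rfl).1
      (hanti N (by lia)) (hd N (by lia)).2
    rw [Finset.sum_range_succ]
    set S := ∑ n ∈ Finset.range (N + 1), (𝐞 (φ n) : ℂ)
    set c := (1 - (𝐞 (φ (N + 1) - φ N) : ℂ))⁻¹
    set c' := (1 - (𝐞 (φ (N + 1 + 1) - φ (N + 1)) : ℂ))⁻¹
    have hsplit : S + 𝐞 (φ (N + 1)) + 𝐞 (φ (N + 1 + 1)) * c'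
        = (S + 𝐞 (φ (N + 1)) * c) + 𝐞 (φ (N + 1)) * (c' - c) := by
      linear_combination fourierChar_eq_sub_mul_inv (hd (N + 1) le_rfl)
    rw [hsplit]
    refine (norm_add_le _ _).trans ?_
    rw [norm_mul, Circle.norm_coe, one_mul, hvar]
    linarith

lemma norm_sum_fourierChar_le_of_mem_Icc {φ : ℕ → ℝ} {δ : ℝ} (hδ : 0 < δ) (N : ℕ)
    (hd : ∀ n < N, φ (n + 1) - φ n ∈ Set.Icc δ (1 - δ))
    (hanti : ∀ n, n + 1 < N → φ (n + 2) - φ (n + 1) ≤ φ (n + 1) - φ n) :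
    ‖∑ n ∈ Finset.range N, (𝐞 (φ n) : ℂ)‖ ≤ 2 / δ := by
  obtain _ | N := N
  · simpa using (div_pos two_pos hδ).le
  have hfirst := hd 0 N.succ_pos
  have hlast := hd N N.lt_succ_self
  have hsum := norm_sum_fourierChar_add_le N
    (fun n hn ↦ ⟨by linarith [(hd n (by lia)).1], by linarith [(hd n (by lia)).2]⟩)
    fun n hn ↦ hanti n (by lia)
  have hboundary : ‖𝐞 (φ (N + 1)) * (1 - (𝐞 (φ (N + 1) - φ N) : ℂ))⁻¹‖ ≤ 1 / 2 + 1 / (4 * δ) := by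
    rw [norm_mul, Circle.norm_coe, one_mul]
    exact norm_inv_one_sub_fourierChar_le hδ hlast
  have hδ1 : 1 ≤ 1 / (2 * δ) := by
    rw [le_div_iff₀ (by positivity)]; linarith [hlast.1, hlast.2]
  have htri := norm_le_add_norm_add (∑ n ∈ Finset.range (N + 1), (𝐞 (φ n) : ℂ))
    (𝐞 (φ (N + 1)) * (1 - (𝐞 (φ (N + 1) - φ N) : ℂ))⁻¹)
  have h4 : 1 / (4 * δ) = 1 / (2 * δ) / 2 := by ring
  have h2 : 2 / δ = 4 * (1 / (2 * δ)) := by ring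
  linarith [norm_inv_one_sub_fourierChar_le hδ hfirst, (abs_le.1 (abs_cot_pi_mul_le hδ hfirst)).1,
    (abs_le.1 (abs_cot_pi_mul_le hδ hlast)).2]

theorem kusmin_landau {φ : ℕ → ℝ} {δ : ℝ} (hδ : 0 < δ) (k : ℤ) (N : ℕ)
    (hd : ∀ n < N, φ (n + 1) - φ n ∈ Set.Icc (k + δ) (k + 1 - δ))
    (hanti : ∀ n, n + 1 < N → φ (n + 2) - φ (n + 1) ≤ φ (n + 1) - φ n) :
    ‖∑ n ∈ Finset.range N, (𝐞 (φ n) : ℂ)‖ ≤ 2 / δ := by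
  have hshift (n : ℕ) : (𝐞 (φ n) : ℂ) = 𝐞 (φ n - k * n) := by
    rw [fourierChar_apply, fourierChar_apply, Complex.exp_eq_exp_iff_exists_int]
    exact ⟨k * n, by push_cast; ring⟩
  rw [Finset.sum_congr rfl fun n _ ↦ hshift n]
  refine norm_sum_fourierChar_le_of_mem_Icc hδ N (fun n hn ↦ ?_) fun n hn ↦ ?_
  · have := hd n hn
    push_cast
    constructor <;> linarith [this.1, this.2]
  · have := hanti n hn
    push_cast
    linarith

lemma exists_eq_Ico_of_ordConnected {s : Finset ℕ} (hs : (s : Set ℕ).OrdConnected) :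
    ∃ a b, s = Finset.Ico a b := by
  obtain rfl | hne := s.eq_empty_or_nonempty
  · exact ⟨0, 0, by simp⟩
  refine ⟨s.min' hne, s.max' hne + 1, subset_antisymm (fun n hn ↦ ?_) fun n hn ↦ ?_⟩
  · exact Finset.mem_Ico.2 ⟨s.min'_le n hn, Nat.lt_succ_of_le (s.le_max' n hn)⟩
  · rw [Finset.mem_Ico, Nat.lt_succ_iff] at hn
    exact hs.out (s.min'_mem hne) (s.max'_mem hne) hn

section LevelSets

variable {d : ℕ → ℝ} {M : ℕ} {l : ℝ}

lemma mul_sub_le_sub_of_forall_le_sub (hd : ∀ n, n + 1 < M → l ≤ d n - d (n + 1)) {m n : ℕ}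
    (hmn : m ≤ n) (hn : n < M) : (n - m) * l ≤ d m - d n := by
  induction n, hmn using Nat.le_induction with
  | base => simp
  | succ n _ ih =>
    push_cast
    linarith [ih (by lia), hd n hn]

lemma antitoneOn_of_forall_le_sub (hl : 0 ≤ l) (hd : ∀ n, n + 1 < M → l ≤ d n - d (n + 1)) :
    AntitoneOn d (Set.Iio M) := fun _ _ _ hn hmn ↦ sub_nonneg.1 <|
  (mul_nonneg (sub_nonneg.2 (Nat.cast_le.2 hmn)) hl).trans
    (mul_sub_le_sub_of_forall_le_sub hd hmn hn)

lemma exists_filter_range_mem_Icc_eq_Ico (hd : AntitoneOn d (Set.Iio M)) (u v : ℝ) :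
    ∃ a b, {n ∈ Finset.range M | d n ∈ Set.Icc u v} = Finset.Ico a b := by
  refine exists_eq_Ico_of_ordConnected ⟨fun m hm n hn i hi ↦ ?_⟩
  simp only [Finset.coe_filter, Finset.mem_range, Set.mem_ofPred_eq] at hm hn ⊢
  have hiM : i < M := hi.2.trans_lt hn.1
  exact ⟨hiM, hn.2.1.trans (hd hiM hn.1 hi.2), (hd hm.1 hiM hi.1).trans hm.2.2⟩

lemma card_filter_range_mem_Icc_le (hl : 0 < l) (hd : ∀ n, n + 1 < M → l ≤ d n - d (n + 1))
    {δ : ℝ} (hδ : 0 ≤ δ) (u : ℝ) :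
    (({n ∈ Finset.range M | d n ∈ Set.Icc u (u + δ)}.card : ℕ) : ℝ) ≤ δ / l + 1 := by
  obtain ⟨a, b, hab⟩ :=
    exists_filter_range_mem_Icc_eq_Ico (antitoneOn_of_forall_le_sub hl.le hd) u (u + δ)
  have hmem (n : ℕ) (hn : n ∈ Finset.Ico a b) : n < M ∧ d n ∈ Set.Icc u (u + δ) := by
    rwa [← hab, Finset.mem_filter, Finset.mem_range] at hn
  rw [hab, Nat.card_Ico]
  obtain hba | hlt := le_or_gt b a
  · rw [Nat.sub_eq_zero_of_le hba, Nat.cast_zero]; positivity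
  obtain ⟨c, rfl⟩ : ∃ c, b = c + 1 := ⟨b - 1, by lia⟩
  have hfirst := hmem a (by simpa using hlt)
  have hlast := hmem c (by simpa using Nat.lt_succ_iff.1 hlt)
  have hspread := mul_sub_le_sub_of_forall_le_sub hd (Nat.lt_succ_iff.1 hlt) hlast.1
  have : (c - a : ℝ) ≤ δ / l := by
    rw [le_div_iff₀ hl]; linarith [hfirst.2.2, hlast.2.1]
  rw [Nat.cast_sub hlt.le]
  push_cast
  linarith

end LevelSets

lemma norm_sum_fourierChar_le_card {ι : Type*} (s : Finset ι) (φ : ι → ℝ) :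
    ‖∑ i ∈ s, (𝐞 (φ i) : ℂ)‖ ≤ s.card := by
  calc ‖∑ i ∈ s, (𝐞 (φ i) : ℂ)‖ ≤ ∑ i ∈ s, ‖(𝐞 (φ i) : ℂ)‖ := norm_sum_le _ _
    _ = s.card := by simp only [Circle.norm_coe, Finset.sum_const, nsmul_eq_mul, mul_one]

section SecondDifference

variable {φ : ℕ → ℝ} {M : ℕ} {l : ℝ}

lemma norm_sum_fourierChar_filter_Icc_le (hl : 0 ≤ l)
    (hd : ∀ n, n + 1 < M → l ≤ (φ (n + 1) - φ n) - (φ (n + 2) - φ (n + 1)))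
    (k : ℤ) {δ : ℝ} (hδ : 0 < δ) :
    ‖∑ n ∈ Finset.range M with φ (n + 1) - φ n ∈ Set.Icc (k + δ) (k + 1 - δ), (𝐞 (φ n) : ℂ)‖
      ≤ 2 / δ := by
  obtain ⟨a, b, hab⟩ := exists_filter_range_mem_Icc_eq_Ico
    (antitoneOn_of_forall_le_sub (d := fun n ↦ φ (n + 1) - φ n) hl hd) (k + δ) (k + 1 - δ)
  have hmem (n : ℕ) (hn : n < b - a) :
      a + n < M ∧ φ (a + n + 1) - φ (a + n) ∈ Set.Icc (k + δ) (k + 1 - δ) := by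
    have : a + n ∈ Finset.Ico a b := Finset.mem_Ico.2 ⟨by lia, by lia⟩
    rwa [← hab, Finset.mem_filter, Finset.mem_range] at this
  rw [hab, Finset.sum_Ico_eq_sum_range]
  refine kusmin_landau (φ := fun n ↦ φ (a + n)) hδ k (b - a) (fun n hn ↦ (hmem n hn).2)
    fun n hn ↦ ?_
  have := hd (a + n) (hmem (n + 1) hn).1
  simp only [← add_assoc]
  linarith

lemma norm_sum_fourierChar_filter_floor_le (hl : 0 < l)
    (hd : ∀ n, n + 1 < M → l ≤ (φ (n + 1) - φ n) - (φ (n + 2) - φ (n + 1)))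
    (k : ℤ) {δ : ℝ} (hδ : 0 < δ) :
    ‖∑ n ∈ Finset.range M with ⌊φ (n + 1) - φ n⌋ = k, (𝐞 (φ n) : ℂ)‖
      ≤ 2 / δ + 2 * (δ / l + 1) := by
  set d : ℕ → ℝ := fun n ↦ φ (n + 1) - φ n
  set F := {n ∈ Finset.range M | ⌊d n⌋ = k} with hF
  set mid := {n ∈ Finset.range M | d n ∈ Set.Icc (k + δ) (k + 1 - δ)} with hmid
  set low := {n ∈ Finset.range M | d n ∈ Set.Icc (k : ℝ) (k + δ)} with hlow
  set high := {n ∈ Finset.range M | d n ∈ Set.Icc (k + 1 - δ) (k + 1 - δ + δ)} with hhigh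
  have hmidF : mid ⊆ F := fun n hn ↦ by
    rw [hmid, Finset.mem_filter] at hn
    rw [hF, Finset.mem_filter, Int.floor_eq_iff]
    exact ⟨hn.1, by linarith [hn.2.1], by linarith [hn.2.2]⟩
  have hrest : F \ mid ⊆ low ∪ high := fun n hn ↦ by
    simp only [hF, hmid, hlow, hhigh, Finset.mem_sdiff, Finset.mem_union, Finset.mem_filter,
      Set.mem_Icc, Int.floor_eq_iff] at hn ⊢
    grind
  have hcard : ((F \ mid).card : ℝ) ≤ 2 * (δ / l + 1) := calc
    ((F \ mid).card : ℝ) ≤ low.card + high.card := by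
      exact_mod_cast (Finset.card_le_card hrest).trans (Finset.card_union_le _ _)
    _ ≤ (δ / l + 1) + (δ / l + 1) := add_le_add
      (card_filter_range_mem_Icc_le hl hd hδ.le _) (card_filter_range_mem_Icc_le hl hd hδ.le _)
    _ = 2 * (δ / l + 1) := by ring
  rw [← Finset.sum_sdiff hmidF, add_comm]
  exact (norm_add_le _ _).trans <| add_le_add (norm_sum_fourierChar_filter_Icc_le hl.le hd k hδ)
    ((norm_sum_fourierChar_le_card _ _).trans hcard)

theorem norm_sum_fourierChar_le_of_second_difference (hl : 0 < l) (hl1 : l ≤ 1)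
    (hd : ∀ n, n + 1 < M → l ≤ (φ (n + 1) - φ n) - (φ (n + 2) - φ (n + 1)))
    {α β : ℝ} (hαβ : α ≤ β) (hrange : ∀ n < M, φ (n + 1) - φ n ∈ Set.Icc α β) :
    ‖∑ n ∈ Finset.range M, (𝐞 (φ n) : ℂ)‖ ≤ (β - α + 2) * (6 / √l) := by
  have hfloor (n : ℕ) (hn : n ∈ Finset.range M) :
      ⌊φ (n + 1) - φ n⌋ ∈ Finset.Icc ⌊α⌋ ⌊β⌋ := by
    have := hrange n (Finset.mem_range.1 hn)
    exact Finset.mem_Icc.2 ⟨Int.floor_le_floor this.1, Int.floor_le_floor this.2⟩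
  have hs : 0 < √l := sqrt_pos.2 hl
  have hfiber (k : ℤ) : ‖∑ n ∈ Finset.range M with ⌊φ (n + 1) - φ n⌋ = k, (𝐞 (φ n) : ℂ)‖
      ≤ 6 / √l := calc
    _ ≤ 2 / √l + 2 * (√l / l + 1) := norm_sum_fourierChar_filter_floor_le hl hd k hs
    _ = 4 / √l + 2 := by rw [sqrt_div_self]; ring
    _ ≤ 4 / √l + 2 / √l := by
      gcongr
      rw [le_div_iff₀ hs]
      linarith [sqrt_le_one.2 hl1]
    _ = 6 / √l := by ring
  have hcard : ((Finset.Icc ⌊α⌋ ⌊β⌋).card : ℝ) ≤ β - α + 2 := by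
    have : ((⌊β⌋ + 1 - ⌊α⌋).toNat : ℤ) = ⌊β⌋ + 1 - ⌊α⌋ :=
      Int.toNat_of_nonneg (by linarith [Int.floor_le_floor hαβ])
    rw [Int.card_Icc, ← Int.cast_natCast, this]
    push_cast
    linarith [Int.floor_le β, Int.lt_floor_add_one α]
  rw [← Finset.sum_fiberwise_of_maps_to hfloor]
  calc _ ≤ ∑ k ∈ Finset.Icc ⌊α⌋ ⌊β⌋, 6 / √l := norm_sum_le_of_le _ fun k _ ↦ hfiber k
    _ = (Finset.Icc ⌊α⌋ ⌊β⌋).card * (6 / √l) := by rw [Finset.sum_const, nsmul_eq_mul]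
    _ ≤ _ := by gcongr

end SecondDifference

/-- The sawtooth function `ψ(t) = {t} - 1/2`, the discrepancy between `⌊t⌋` and its average. -/
noncomputable def sawtooth (t : ℝ) : ℝ := Int.fract t - 1 / 2

lemma hasSum_cos_div_sq_bernoulliFun_fract (t : ℝ) :
    HasSum (fun n : ℕ ↦ 1 / (n : ℝ) ^ 2 * cos (2 * π * n * t))
      (π ^ 2 * bernoulliFun 2 (Int.fract t)) := by
  convert hasSum_one_div_nat_pow_mul_cos (k := 1) one_ne_zero
    ⟨Int.fract_nonneg t, (Int.fract_lt_one t).le⟩ using 1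
  · ext n
    have : 2 * π * n * t = 2 * π * n * Int.fract t + ((n * ⌊t⌋ : ℤ) : ℝ) * (2 * π) := by
      nth_rw 1 [← Int.fract_add_floor t]
      push_cast
      ring
    rw [mul_one, this, cos_add_int_mul_two_pi]
  · change _ = _ * bernoulliFun (2 * 1) (Int.fract t)
    rw [mul_one, Nat.factorial_two, Nat.cast_two]
    ring

lemma fract_add_eq_or {t δ : ℝ} (hδ : 0 ≤ δ) (hδ1 : δ ≤ 1) :
    Int.fract (t + δ) = Int.fract t + δ ∨
      Int.fract (t + δ) = Int.fract t + δ - 1 ∧ 1 ≤ Int.fract t + δ := by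
  have hnonneg := Int.fract_nonneg t
  have hlt := Int.fract_lt_one t
  have hsplit := Int.fract_add_floor t
  obtain h | h := lt_or_ge (Int.fract t + δ) 1
  · exact .inl (Int.fract_eq_iff.2 ⟨by linarith, h, ⌊t⌋, by linarith⟩)
  · exact .inr ⟨Int.fract_eq_iff.2 ⟨by linarith, by linarith, ⌊t⌋ + 1, by push_cast; linarith⟩, h⟩

lemma bernoulliFun_fract_add_sub_le {t δ : ℝ} (hδ : 0 < δ) (hδ1 : δ ≤ 1) :
    (bernoulliFun 2 (Int.fract (t + δ)) - bernoulliFun 2 (Int.fract t)) / (2 * δ)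
      ≤ sawtooth t + δ / 2 := by
  rw [sawtooth, bernoulliFun_two, bernoulliFun_two, div_le_iff₀ (by positivity)]
  obtain h | ⟨h, hge⟩ := fract_add_eq_or (t := t) hδ.le hδ1 <;> rw [h] <;> nlinarith

lemma sawtooth_le_bernoulliFun_fract_sub {t δ : ℝ} (hδ : 0 < δ) (hδ1 : δ ≤ 1) :
    sawtooth t ≤
      (bernoulliFun 2 (Int.fract t) - bernoulliFun 2 (Int.fract (t - δ))) / (2 * δ) + δ / 2 := by
  rw [sawtooth, bernoulliFun_two, bernoulliFun_two, ← sub_le_iff_le_add,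
    le_div_iff₀ (by positivity)]
  have hcases := fract_add_eq_or (t := t - δ) hδ.le hδ1
  rw [sub_add_cancel] at hcases
  have hlt := Int.fract_lt_one (t - δ)
  obtain h | ⟨h, hge⟩ := hcases
  · rw [h]
    nlinarith
  · rw [h]
    nlinarith [hge]

lemma min_one_sq_div_cube_mul_le {w z : ℝ} (hw : 0 ≤ w) (hz : 0 < z) (hwz : w ≤ z) :
    min 1 (z ^ 2) / z ^ 3 * (z ^ 2 - w ^ 2) ≤ 8 * (z / (1 + z) - w / (1 + w)) := by
  have hmin : min 1 (z ^ 2) ≤ 4 * z ^ 2 / (1 + z) ^ 2 := by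
    rw [le_div_iff₀ (by positivity)]
    obtain h | h := le_total z 1
    · exact mul_le_mul (min_le_right _ _) (by nlinarith) (by positivity) (by positivity)
        |>.trans_eq (mul_comm _ _)
    · exact mul_le_mul (min_le_left _ _) (by nlinarith : (1 + z) ^ 2 ≤ 4 * z ^ 2)
        (by positivity) zero_le_one |>.trans_eq (one_mul _)
  calc min 1 (z ^ 2) / z ^ 3 * (z ^ 2 - w ^ 2)
      ≤ 4 * z ^ 2 / (1 + z) ^ 2 / z ^ 3 * (2 * z * (z - w)) := by
        gcongr
        · nlinarith
        · nlinarith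
    _ = 8 * ((z - w) / ((1 + z) * (1 + z))) := by field_simp; ring
    _ ≤ 8 * ((z - w) / ((1 + z) * (1 + w))) := by gcongr
    _ = 8 * (z / (1 + z) - w / (1 + w)) := by field_simp; ring

lemma sum_min_one_mul_sqrt_div_sq_le {δ : ℝ} (hδ : 0 < δ) (N : ℕ) :
    ∑ n ∈ Finset.range N, min 1 (n * δ) * √n / (n : ℝ) ^ 2 ≤ 8 * √δ := by
  set z : ℕ → ℝ := fun n ↦ √(n * δ) with hz
  set G : ℕ → ℝ := fun n ↦ z n / (1 + z n) with hG
  have hz0 (n : ℕ) : 0 ≤ z n := sqrt_nonneg _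
  have hzsq (n : ℕ) : z n ^ 2 = n * δ := sq_sqrt (by positivity)
  have hterm (n : ℕ) : min 1 ((n + 1 : ℕ) * δ) * √(n + 1 : ℕ) / ((n + 1 : ℕ) : ℝ) ^ 2
      ≤ 8 * √δ * (G (n + 1) - G n) := by
    have hpos : 0 < z (n + 1) := by positivity
    have hmono : z n ≤ z (n + 1) := sqrt_le_sqrt (by gcongr; simp)
    have hn : ((n + 1 : ℕ) : ℝ) = z (n + 1) ^ 2 / √δ ^ 2 := by
      rw [hzsq, sq_sqrt hδ.le, mul_div_cancel_right₀ _ hδ.ne']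
    have hsub : z (n + 1) ^ 2 - z n ^ 2 = √δ ^ 2 := by
      rw [hzsq, hzsq, sq_sqrt hδ.le]; push_cast; ring
    have hsqrtδ : 0 < √δ := sqrt_pos.2 hδ
    calc _ = √δ * (min 1 (z (n + 1) ^ 2) / z (n + 1) ^ 3 * (z (n + 1) ^ 2 - z n ^ 2)) := by
          rw [← hzsq, hn, sqrt_div' _ (by positivity), sqrt_sq hpos.le, sqrt_sq hsqrtδ.le, hsub]
          field_simp
      _ ≤ √δ * (8 * (G (n + 1) - G n)) := by
          gcongr ?_ * ?_
          exact min_one_sq_div_cube_mul_le (hz0 n) hpos hmono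
      _ = _ := by ring
  have hG1 (n : ℕ) : G n ≤ 1 := div_le_one_of_le₀ (by linarith) (by linarith [hz0 n])
  obtain _ | N := N
  · simp
  rw [Finset.sum_range_succ', Nat.cast_zero, sqrt_zero, mul_zero, zero_div, add_zero]
  calc _ ≤ ∑ n ∈ Finset.range N, 8 * √δ * (G (n + 1) - G n) := Finset.sum_le_sum fun n _ ↦ hterm n
    _ = 8 * √δ * (G N - G 0) := by rw [← Finset.mul_sum, Finset.sum_range_sub]
    _ ≤ 8 * √δ * 1 := by
      gcongr
      simpa [hG, hz] using hG1 N
    _ = 8 * √δ := mul_one _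

lemma norm_fourierChar_natCast_mul_sub_one_le (n : ℕ) (s : ℝ) :
    ‖(𝐞 (n * s) : ℂ) - 1‖ ≤ 2 * π * min 1 (n * |s|) := by
  rw [mul_min_of_nonneg _ _ two_pi_pos.le, le_min_iff]
  constructor
  · refine (norm_sub_le _ _).trans ?_
    rw [Circle.norm_coe, norm_one]
    linarith [pi_gt_three]
  · rw [fourierChar_apply, mul_comm _ Complex.I]
    refine (norm_exp_I_mul_ofReal_sub_one_le).trans_eq ?_
    rw [norm_eq_abs, abs_mul, abs_of_pos two_pi_pos, abs_mul, Nat.abs_cast]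

section SawtoothSums

variable {ι : Type*} {T : Finset ι} {t : ι → ℝ} {A : ℝ}

lemma abs_sum_cos_sub_cos_le (n : ℕ) (s : ℝ) :
    |∑ a ∈ T, (cos (2 * π * n * (t a + s)) - cos (2 * π * n * t a))|
      ≤ 2 * π * min 1 (n * |s|) * ‖∑ a ∈ T, (𝐞 (n * t a) : ℂ)‖ := by
  have hre (y : ℝ) : (𝐞 y : ℂ).re = cos (2 * π * y) := by
    rw [fourierChar_apply, Complex.exp_ofReal_mul_I_re]
  have hsum : ∑ a ∈ T, (cos (2 * π * n * (t a + s)) - cos (2 * π * n * t a))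
      = (((𝐞 (n * s) : ℂ) - 1) * ∑ a ∈ T, (𝐞 (n * t a) : ℂ)).re := by
    rw [Finset.mul_sum, Complex.re_sum]
    refine Finset.sum_congr rfl fun a _ ↦ ?_
    rw [sub_one_mul, ← Circle.coe_mul, ← AddChar.map_add_eq_mul, Complex.sub_re, hre, hre]
    ring_nf
  rw [hsum]
  refine (Complex.abs_re_le_norm _).trans ?_
  rw [norm_mul]
  gcongr
  exact norm_fourierChar_natCast_mul_sub_one_le n s

lemma abs_sum_bernoulliFun_fract_add_sub_le
    (hA : ∀ h : ℕ, 1 ≤ h → ‖∑ a ∈ T, (𝐞 (h * t a) : ℂ)‖ ≤ A * √h) {s : ℝ} (hs : s ≠ 0) :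
    |∑ a ∈ T, (bernoulliFun 2 (Int.fract (t a + s)) - bernoulliFun 2 (Int.fract (t a)))|
      ≤ 6 * A * √|s| := by
  set D := ∑ a ∈ T, (bernoulliFun 2 (Int.fract (t a + s)) - bernoulliFun 2 (Int.fract (t a)))
  have hA0 : 0 ≤ A := by simpa using (norm_nonneg _).trans (hA 1 le_rfl)
  have hFourier : HasSum (fun n : ℕ ↦
      1 / (n : ℝ) ^ 2 * ∑ a ∈ T, (cos (2 * π * n * (t a + s)) - cos (2 * π * n * t a)))
      (π ^ 2 * D) := by
    simp only [D, Finset.mul_sum, mul_sub]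
    exact hasSum_sum fun a _ ↦ (hasSum_cos_div_sq_bernoulliFun_fract _).sub
      (hasSum_cos_div_sq_bernoulliFun_fract _)
  have hterm (n : ℕ) :
      |1 / (n : ℝ) ^ 2 * ∑ a ∈ T, (cos (2 * π * n * (t a + s)) - cos (2 * π * n * t a))|
        ≤ 2 * π * A * (min 1 (n * |s|) * √n / (n : ℝ) ^ 2) := by
    obtain rfl | hn := n.eq_zero_or_pos
    · simp
    rw [abs_mul, abs_of_nonneg (by positivity : (0 : ℝ) ≤ 1 / (n : ℝ) ^ 2)]
    calc _ ≤ 1 / (n : ℝ) ^ 2 * (2 * π * min 1 (n * |s|) * (A * √n)) := by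
          gcongr
          exact (abs_sum_cos_sub_cos_le n s).trans (by gcongr; exact hA n hn)
      _ = _ := by ring
  have hD : |π ^ 2 * D| ≤ 2 * π * A * (8 * √|s|) := by
    refine le_of_tendsto hFourier.tendsto_sum_nat.abs (.of_forall fun N ↦ ?_)
    refine (Finset.abs_sum_le_sum_abs _ _).trans ((Finset.sum_le_sum fun n _ ↦ hterm n).trans ?_)
    rw [← Finset.mul_sum]
    gcongr
    exact sum_min_one_mul_sqrt_div_sq_le (abs_pos.2 hs) N
  rw [abs_mul, abs_of_pos (by positivity : 0 < π ^ 2)] at hD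
  have hcancel : π * |D| ≤ 16 * (A * √|s|) := le_of_mul_le_mul_left (by linarith) pi_pos
  nlinarith [pi_gt_three, abs_nonneg D, mul_nonneg hA0 (sqrt_nonneg |s|)]

theorem abs_sum_sawtooth_le
    (hA : ∀ h : ℕ, 1 ≤ h → ‖∑ a ∈ T, (𝐞 (h * t a) : ℂ)‖ ≤ A * √h)
    {δ : ℝ} (hδ : 0 < δ) (hδ1 : δ ≤ 1) :
    |∑ a ∈ T, sawtooth (t a)| ≤ T.card * (δ / 2) + 3 * A / √δ := by
  have hforward := abs_sum_bernoulliFun_fract_add_sub_le hA hδ.ne'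
  have hbackward := abs_sum_bernoulliFun_fract_add_sub_le hA (neg_ne_zero.2 hδ.ne')
  rw [abs_neg, abs_of_pos hδ] at hbackward
  rw [abs_of_pos hδ] at hforward
  have hlower := Finset.sum_le_sum fun a (_ : a ∈ T) ↦
    bernoulliFun_fract_add_sub_le (t := t a) hδ hδ1
  have hupper := Finset.sum_le_sum fun a (_ : a ∈ T) ↦
    sawtooth_le_bernoulliFun_fract_sub (t := t a) hδ hδ1
  simp only [sub_eq_add_neg (t _) δ, Finset.sum_add_distrib, ← Finset.sum_div, Finset.sum_const,
    nsmul_eq_mul] at hlower hupper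
  have hconst : 6 * A * √δ / (2 * δ) = 3 * A / √δ := by
    rw [mul_div_mul_comm, sqrt_div_self]
    ring
  rw [← hconst, abs_le]
  constructor
  · have := div_le_div_of_nonneg_right (abs_le.1 hforward).1 (by positivity : 0 ≤ 2 * δ)
    rw [neg_div] at this
    linarith
  · have := div_le_div_of_nonneg_right (neg_le.1 (abs_le.1 hbackward).1)
      (by positivity : 0 ≤ 2 * δ)
    simp only [← Finset.sum_neg_distrib, neg_sub] at this
    linarith

end SawtoothSums

section CircleArc

variable {x t : ℝ}

lemma sqrt_sub_sq_sub_sqrt_sub_add_one_sq (ht : 0 ≤ t) (htx : (t + 1) ^ 2 ≤ x) :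
    √(x - t ^ 2) - √(x - (t + 1) ^ 2)
      = (2 * t + 1) / (√(x - t ^ 2) + √(x - (t + 1) ^ 2)) := by
  have hpos : 0 < √(x - t ^ 2) := sqrt_pos.2 (by nlinarith)
  rw [eq_div_iff (by positivity), mul_comm, ← sq_sub_sq, sq_sqrt (by nlinarith),
    sq_sqrt (by linarith)]
  ring

lemma sqrt_sub_sq_sub_mem_Icc (ht : 0 ≤ t) (htx : 2 * (t + 1) ^ 2 ≤ x) :
    √(x - t ^ 2) - √(x - (t + 1) ^ 2) ∈ Set.Icc 0 1 := by
  have hnext : t + 1 ≤ √(x - (t + 1) ^ 2) := le_sqrt_of_sq_le (by linarith)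
  have hcur : t + 1 ≤ √(x - t ^ 2) := le_sqrt_of_sq_le (by nlinarith)
  rw [sqrt_sub_sq_sub_sqrt_sub_add_one_sq ht (by nlinarith)]
  exact ⟨by positivity, div_le_one_of_le₀ (by linarith) (by positivity)⟩

lemma one_div_sqrt_le_second_difference (ht : 0 ≤ t) (htx : (t + 2) ^ 2 ≤ x) :
    1 / √x ≤ (√(x - (t + 1) ^ 2) - √(x - t ^ 2)) - (√(x - (t + 2) ^ 2) - √(x - (t + 1) ^ 2)) := by
  have hfirst := sqrt_sub_sq_sub_sqrt_sub_add_one_sq ht (by nlinarith)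
  have hsecond := sqrt_sub_sq_sub_sqrt_sub_add_one_sq (x := x) (t := t + 1) (by linarith)
    (by linarith)
  rw [show t + 1 + 1 = t + 2 by ring] at hsecond
  set A := √(x - t ^ 2)
  set B := √(x - (t + 1) ^ 2)
  set C := √(x - (t + 2) ^ 2)
  have hBpos : 0 < B := sqrt_pos.2 (by nlinarith)
  have hAx : A ≤ √x := sqrt_le_sqrt (by nlinarith)
  have hBA : B ≤ A := sqrt_le_sqrt (by nlinarith)
  have hCB : C ≤ B := sqrt_le_sqrt (by nlinarith)
  calc 1 / √x = 2 / (√x + √x) := by ring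
    _ ≤ 2 / (A + B) := by gcongr; linarith
    _ = (2 * (t + 1) + 1) / (A + B) - (2 * t + 1) / (A + B) := by ring
    _ ≤ (2 * (t + 1) + 1) / (B + C) - (2 * t + 1) / (A + B) := by
      gcongr (2 * (t + 1) + 1) / ?_ - _
      linarith
    _ = (B - A) - (C - B) := by linarith

lemma natCast_le_sqrt {M : ℕ} (hM : 2 * (M : ℝ) ^ 2 ≤ x) : (M : ℝ) ≤ √x :=
  le_sqrt_of_sq_le (by linarith [sq_nonneg (M : ℝ)])

lemma norm_sum_fourierChar_mul_sqrt_sub_sq_le (hx : 1 ≤ x) {M : ℕ} (hM : 2 * (M : ℝ) ^ 2 ≤ x)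
    {h : ℕ} (hh : 1 ≤ h) :
    ‖∑ n ∈ Finset.range (M + 1), (𝐞 (h * √(x - (n : ℝ) ^ 2)) : ℂ)‖ ≤ 19 * √√x * √h := by
  have hh' : (1 : ℝ) ≤ h := by exact_mod_cast hh
  have hsx : 1 ≤ √x := one_le_sqrt.2 hx
  have hone : 1 ≤ √√x * √h := one_le_mul_of_one_le_of_one_le (one_le_sqrt.2 hsx) (one_le_sqrt.2 hh')
  rw [Finset.sum_range_succ]
  refine (norm_add_le _ _).trans ?_
  rw [Circle.norm_coe]
  suffices ‖∑ n ∈ Finset.range M, (𝐞 (h * √(x - (n : ℝ) ^ 2)) : ℂ)‖ ≤ 18 * (√√x * √h) by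
    linarith
  have hrange {n : ℕ} (hn : n < M) : 2 * ((n : ℝ) + 1) ^ 2 ≤ x := by
    have : (n : ℝ) + 1 ≤ M := by exact_mod_cast hn
    nlinarith
  obtain hlarge | hsmall := le_total (√x) h
  · calc _ ≤ (M : ℝ) := by simpa using norm_sum_fourierChar_le_card (Finset.range M) _
      _ ≤ √√x * √√x := by rw [mul_self_sqrt (sqrt_nonneg x)]; exact natCast_le_sqrt hM
      _ ≤ √√x * √h := by gcongr
      _ ≤ 18 * (√√x * √h) := by linarith
  have hvdC := norm_sum_fourierChar_le_of_second_difference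
    (φ := fun n : ℕ ↦ h * √(x - (n : ℝ) ^ 2)) (M := M) (l := h / √x) (α := -h) (β := 0)
    (by positivity) (div_le_one_of_le₀ hsmall (sqrt_nonneg x)) (fun n hn ↦ ?_) (by linarith)
    fun n hn ↦ ?_
  · calc _ ≤ (0 - -(h : ℝ) + 2) * (6 / √(h / √x)) := hvdC
      _ ≤ (3 * h) * (6 / √(h / √x)) := by gcongr; linarith
      _ = 18 * (√√x * (h / √h)) := by rw [sqrt_div (by positivity)]; field_simp; ring
      _ = 18 * (√√x * √h) := by rw [div_sqrt]
  · have hsecond := one_div_sqrt_le_second_difference (x := x) (Nat.cast_nonneg n)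
      (by have := hrange hn; push_cast at this; nlinarith)
    push_cast
    rw [← mul_sub, ← mul_sub, ← mul_sub, div_eq_mul_one_div]
    gcongr
  · have hfirst := sqrt_sub_sq_sub_mem_Icc (Nat.cast_nonneg n) (hrange hn)
    push_cast
    constructor <;> nlinarith [hfirst.1, hfirst.2]

lemma abs_sum_sawtooth_sqrt_sub_sq_le (hx : 1 ≤ x) {M : ℕ} (hM : 2 * (M : ℝ) ^ 2 ≤ x) :
    |∑ n ∈ Finset.range (M + 1), sawtooth √(x - (n : ℝ) ^ 2)| ≤ 58 * x ^ (1 / 3 : ℝ) := by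
  have hx0 : 0 < x := by linarith
  have hM1 : (M : ℝ) + 1 ≤ 2 * x ^ (1 / 2 : ℝ) := by
    rw [← sqrt_eq_rpow]
    linarith [natCast_le_sqrt hM, one_le_sqrt.2 hx]
  refine (abs_sum_sawtooth_le (fun h hh ↦ norm_sum_fourierChar_mul_sqrt_sub_sq_le hx hM hh)
    (δ := x ^ (-1 / 6 : ℝ)) (by positivity)
    (rpow_le_one_of_one_le_of_nonpos hx (by norm_num))).trans ?_
  have hroots : √√x / √(x ^ (-1 / 6 : ℝ)) = x ^ (1 / 3 : ℝ) := by
    simp only [sqrt_eq_rpow]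
    rw [← rpow_mul hx0.le, ← rpow_mul hx0.le, ← rpow_sub hx0]
    norm_num
  have hcard : x ^ (1 / 2 : ℝ) * x ^ (-1 / 6 : ℝ) = x ^ (1 / 3 : ℝ) := by
    rw [← rpow_add hx0]
    norm_num
  rw [Finset.card_range, ← mul_assoc, mul_div_assoc, hroots]
  push_cast
  calc _ ≤ 2 * x ^ (1 / 2 : ℝ) * (x ^ (-1 / 6 : ℝ) / 2) + 3 * 19 * x ^ (1 / 3 : ℝ) := by gcongr
    _ = 58 * x ^ (1 / 3 : ℝ) := by linear_combination hcard

end CircleArc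

section ConcaveTrapezoid

open intervalIntegral

variable {f : ℝ → ℝ}

lemma integral_affine_zero_one (c e : ℝ) : ∫ s in (0 : ℝ)..1, (c + s * e) = c + e / 2 := by
  rw [integral_add (by simp) (by apply Continuous.intervalIntegrable; fun_prop),
    integral_mul_const, integral_id, integral_const]
  simp
  ring

/- The graph of `f` over `[a, a + 1]` lies above its chord and below the line through the points
of abscissae `a - 1` and `a`. -/
lemma integral_sub_trapezoid_mem_Icc {a : ℝ} (hf : ConcaveOn ℝ (Set.Icc (a - 1) (a + 1)) f)
    (hfi : IntervalIntegrable f MeasureTheory.volume a (a + 1)) :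
    (∫ t in a..a + 1, f t) - (f a + f (a + 1)) / 2
      ∈ Set.Icc 0 (((f a - f (a - 1)) - (f (a + 1) - f a)) / 2) := by
  have hsub : ∫ s in (0 : ℝ)..1, f (a + s) = ∫ t in a..a + 1, f t := by
    rw [integral_comp_add_left, add_zero]
  have hfint : IntervalIntegrable (fun s ↦ f (a + s)) MeasureTheory.volume 0 1 := by
    simpa using hfi.comp_add_left a
  have haffine (c e : ℝ) :
      IntervalIntegrable (fun s : ℝ ↦ c + s * e) MeasureTheory.volume 0 1 :=
    Continuous.intervalIntegrable (by fun_prop) _ _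
  have hlower : ∫ s in (0 : ℝ)..1, (f a + s * (f (a + 1) - f a))
      ≤ ∫ s in (0 : ℝ)..1, f (a + s) := by
    refine integral_mono_on zero_le_one (haffine _ _) hfint fun s hs ↦ ?_
    have := hf.2 (x := a) (y := a + 1) ⟨by linarith, by linarith⟩ ⟨by linarith, le_rfl⟩
      (sub_nonneg.2 hs.2) hs.1 (sub_add_cancel _ _)
    simp only [smul_eq_mul] at this
    rw [show (1 - s) * a + s * (a + 1) = a + s by ring] at this
    linarith
  have hupper : ∫ s in (0 : ℝ)..1, f (a + s)
      ≤ ∫ s in (0 : ℝ)..1, (f a + s * (f a - f (a - 1))) := by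
    refine integral_mono_on zero_le_one hfint (haffine _ _) fun s hs ↦ ?_
    have hs0 : 0 < 1 + s := by linarith [hs.1]
    have := hf.2 (x := a - 1) (y := a + s) ⟨by linarith, by linarith⟩
      ⟨by linarith [hs.1], by linarith [hs.2]⟩ (div_nonneg hs.1 hs0.le)
      (div_nonneg zero_le_one hs0.le) (by field_simp; ring)
    simp only [smul_eq_mul] at this
    rw [show s / (1 + s) * (a - 1) + 1 / (1 + s) * (a + s) = a by field_simp; ring,
      div_mul_eq_mul_div, div_mul_eq_mul_div, ← add_div, div_le_iff₀ hs0] at this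
    linarith
  rw [integral_affine_zero_one] at hlower hupper
  rw [← hsub]
  constructor <;> linarith

lemma integral_sub_sum_trapezoid_mem_Icc {M : ℕ} (hf : ConcaveOn ℝ (Set.Icc (-1) (M : ℝ)) f)
    (hfi : ContinuousOn f (Set.Icc (-1) (M : ℝ))) :
    (∫ t in (0 : ℝ)..M, f t) - ∑ n ∈ Finset.range M, (f n + f (n + 1)) / 2
      ∈ Set.Icc 0 (((f 0 - f (-1)) - (f M - f (M - 1))) / 2) := by
  have hIcc {n : ℕ} (hn : n < M) : Set.Icc ((n : ℝ) - 1) (n + 1) ⊆ Set.Icc (-1) (M : ℝ) := by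
    have : (n : ℝ) + 1 ≤ M := by exact_mod_cast hn
    exact Set.Icc_subset_Icc (by linarith [n.cast_nonneg (α := ℝ)]) this
  have hfint {n : ℕ} (hn : n < M) : IntervalIntegrable f MeasureTheory.volume n (n + 1) :=
    (hfi.mono ((Set.Icc_subset_Icc (by linarith) le_rfl).trans (hIcc hn)))
      |>.intervalIntegrable_of_Icc (by linarith)
  have hstep {n : ℕ} (hn : n ∈ Finset.range M) := integral_sub_trapezoid_mem_Icc
    (hf.subset (hIcc (Finset.mem_range.1 hn)) (convex_Icc _ _)) (hfint (Finset.mem_range.1 hn))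
  have hsplit : ∫ t in (0 : ℝ)..M, f t = ∑ n ∈ Finset.range M, ∫ t in (n : ℝ)..n + 1, f t := by
    have := sum_integral_adjacent_intervals (a := fun n : ℕ ↦ (n : ℝ)) (n := M) (f := f)
      (μ := MeasureTheory.volume) fun n hn ↦ by simpa using hfint hn
    simpa using this.symm
  have htelescope : ∑ n ∈ Finset.range M, ((f n - f (n - 1)) - (f (n + 1) - f n))
      = (f 0 - f (-1)) - (f M - f (M - 1)) := by
    simpa using Finset.sum_range_sub' (fun n : ℕ ↦ f n - f (n - 1)) M
  rw [hsplit, ← Finset.sum_sub_distrib, ← htelescope, Finset.sum_div]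
  exact ⟨Finset.sum_nonneg fun n hn ↦ (hstep hn).1, Finset.sum_le_sum fun n hn ↦ (hstep hn).2⟩

end ConcaveTrapezoid

lemma concaveOn_sqrt_sub_sq {x : ℝ} (hx : 0 ≤ x) :
    ConcaveOn ℝ (Set.Icc (-√x) √x) fun t ↦ √(x - t ^ 2) := by
  refine ⟨convex_Icc _ _, fun s hs t ht a b ha hb hab ↦ ?_⟩
  have hnonneg {u : ℝ} (hu : u ∈ Set.Icc (-√x) √x) : x - u ^ 2 ∈ Set.Ici 0 :=
    sub_nonneg.2 ((Real.sq_le hx).2 hu)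
  refine (strictConcaveOn_sqrt.concaveOn.2 (hnonneg hs) (hnonneg ht) ha hb hab).trans
    (sqrt_le_sqrt ?_)
  have hsq := even_two.convexOn_pow.2 (Set.mem_univ s) (Set.mem_univ t) ha hb hab
  simp only [smul_eq_mul] at hsq ⊢
  linear_combination hsq + x * hab

lemma integral_sqrt_sq_sub_sq {r θ : ℝ} (hr : 0 ≤ r) (hθ : θ ∈ Set.Icc 0 (π / 2)) :
    ∫ t in (0 : ℝ)..r * sin θ, √(r ^ 2 - t ^ 2) = r ^ 2 * (θ + sin θ * cos θ) / 2 := by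
  have hderiv (u : ℝ) : HasDerivAt (fun u ↦ r * sin u) (r * cos u) u :=
    (hasDerivAt_sin u).const_mul r
  have hsubst := intervalIntegral.integral_comp_mul_deriv (a := 0) (b := θ)
    (g := fun t ↦ √(r ^ 2 - t ^ 2)) (fun u _ ↦ hderiv u) (by fun_prop) (by fun_prop)
  rw [sin_zero, mul_zero] at hsubst
  rw [← hsubst]
  calc _ = ∫ u in (0 : ℝ)..θ, r ^ 2 * cos u ^ 2 := by
        refine intervalIntegral.integral_congr fun u hu ↦ ?_
        rw [Set.uIcc_of_le hθ.1] at hu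
        have hcos : 0 ≤ cos u := cos_nonneg_of_neg_pi_div_two_le_of_le
          (by linarith [hu.1, pi_pos]) (hu.2.trans hθ.2)
        have : r ^ 2 - (r * sin u) ^ 2 = (r * cos u) ^ 2 := by
          rw [mul_pow, mul_pow, cos_sq']; ring
        simp only [Function.comp_apply]
        rw [this, sqrt_sq (by positivity)]
        ring
    _ = r ^ 2 * (θ + sin θ * cos θ) / 2 := by
        rw [intervalIntegral.integral_const_mul, integral_cos_sq, sin_zero]
        ring

section EighthDisc

variable {x : ℝ} {M : ℕ}

lemma integral_sqrt_sub_sq_sqrt_half (hx : 0 ≤ x) :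
    ∫ t in (0 : ℝ)..√(x / 2), √(x - t ^ 2) = x / 4 + π * x / 8 := by
  have hendpoint : √x * sin (π / 4) = √(x / 2) := by
    rw [sin_pi_div_four, sqrt_div_self, sqrt_div hx, div_eq_mul_inv]
  have := integral_sqrt_sq_sub_sq (sqrt_nonneg x) (θ := π / 4)
    ⟨by positivity, by linarith [pi_pos]⟩
  rw [hendpoint, sq_sqrt hx, sin_pi_div_four, cos_pi_div_four] at this
  rw [this, div_mul_div_comm, mul_self_sqrt zero_le_two]
  ring

lemma integral_sub_sum_trapezoid_sqrt_sub_sq_mem_Icc (hx : 1 ≤ x) (hM : 2 * (M : ℝ) ^ 2 ≤ x) :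
    (∫ t in (0 : ℝ)..M, √(x - t ^ 2))
        - ∑ n ∈ Finset.range M, (√(x - (n : ℝ) ^ 2) + √(x - ((n : ℝ) + 1) ^ 2)) / 2
      ∈ Set.Icc 0 1 := by
  have htrap := integral_sub_sum_trapezoid_mem_Icc (M := M)
    ((concaveOn_sqrt_sub_sq (by linarith)).subset
      (Set.Icc_subset_Icc (neg_le_neg (one_le_sqrt.2 hx)) (natCast_le_sqrt hM)) (convex_Icc _ _))
    (by fun_prop)
  refine ⟨htrap.1, htrap.2.trans ?_⟩
  obtain rfl | hM0 := M.eq_zero_or_pos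
  · simp
  have hM1 : (1 : ℝ) ≤ M := Nat.one_le_cast.2 hM0
  have hfirst := (sqrt_sub_sq_sub_mem_Icc (x := x) le_rfl (by nlinarith)).2
  have hlast := (sqrt_sub_sq_sub_mem_Icc (sub_nonneg.2 hM1) (by rwa [sub_add_cancel] : _ ≤ x)).2
  rw [zero_add, one_pow, zero_pow two_ne_zero, sub_zero] at hfirst
  rw [sub_add_cancel] at hlast
  rw [neg_one_sq, zero_pow two_ne_zero, sub_zero]
  linarith

lemma integral_sqrt_sub_sq_mem_Icc (hx : 0 ≤ x) (hM : (M : ℝ) ≤ √(x / 2)) :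
    ∫ t in (M : ℝ)..√(x / 2), √(x - t ^ 2)
      ∈ Set.Icc (√(x / 2) * (√(x / 2) - M)) (√(x - M ^ 2) * (√(x / 2) - M)) := by
  have hfint : IntervalIntegrable (fun t ↦ √(x - t ^ 2)) MeasureTheory.volume M √(x / 2) :=
    Continuous.intervalIntegrable (by fun_prop) _ _
  have hconst (c : ℝ) : ∫ _ in (M : ℝ)..√(x / 2), c = c * (√(x / 2) - M) := by
    rw [intervalIntegral.integral_const, smul_eq_mul, mul_comm]
  rw [← hconst, ← hconst]
  constructor
  · refine intervalIntegral.integral_mono_on hM (by simp) hfint fun t ht ↦ sqrt_le_sqrt ?_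
    have : t ^ 2 ≤ x / 2 := by
      rw [← sq_sqrt (by linarith : 0 ≤ x / 2)]
      exact pow_le_pow_left₀ (M.cast_nonneg.trans ht.1) ht.2 2
    linarith
  · refine intervalIntegral.integral_mono_on hM hfint (by simp) fun t ht ↦ sqrt_le_sqrt ?_
    gcongr
    exact ht.1

lemma two_mul_sum_sqrt_sub_sq_sub_mem_Icc (hx : 1 ≤ x) (hM : (M : ℝ) ≤ √(x / 2))
    (hM1 : √(x / 2) < M + 1) :
    2 * ∑ n ∈ Finset.range (M + 1), √(x - (n : ℝ) ^ 2) - (M ^ 2 + M + √x + π * x / 4)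
      ∈ Set.Icc (-7) 2 := by
  have hx0 : 0 ≤ x := by linarith
  have hm0 : 0 ≤ √(x / 2) := sqrt_nonneg _
  have hmsq : √(x / 2) ^ 2 = x / 2 := sq_sqrt (by linarith)
  have hM0 : (0 : ℝ) ≤ M := M.cast_nonneg
  have hMsq : 2 * (M : ℝ) ^ 2 ≤ x := by nlinarith [hm0, hM0]
  obtain ⟨htrap0, htrap1⟩ := integral_sub_sum_trapezoid_sqrt_sub_sq_mem_Icc hx hMsq
  obtain ⟨htail0, htail1⟩ := integral_sqrt_sub_sq_mem_Icc hx0 hM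
  have hsplit := intervalIntegral.integral_add_adjacent_intervals
    (Continuous.intervalIntegrable (u := fun t ↦ √(x - t ^ 2)) (by fun_prop) 0 M)
    (Continuous.intervalIntegrable (by fun_prop) M √(x / 2)) (μ := MeasureTheory.volume)
  rw [integral_sqrt_sub_sq_sqrt_half hx0] at hsplit
  have hsum : 2 * ∑ n ∈ Finset.range (M + 1), √(x - (n : ℝ) ^ 2)
      = 2 * ∑ n ∈ Finset.range M, (√(x - (n : ℝ) ^ 2) + √(x - ((n : ℝ) + 1) ^ 2)) / 2
        + √x + √(x - (M : ℝ) ^ 2) := by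
    rw [← Finset.sum_div, Finset.sum_add_distrib]
    have hfirst := Finset.sum_range_succ (fun n : ℕ ↦ √(x - (n : ℝ) ^ 2)) M
    have hlast := Finset.sum_range_succ' (fun n : ℕ ↦ √(x - (n : ℝ) ^ 2)) M
    simp only [Nat.cast_add, Nat.cast_one, Nat.cast_zero, ne_eq, OfNat.ofNat_ne_zero,
      not_false_eq_true, zero_pow, sub_zero] at hlast
    linarith
  have hlast0 : √(x / 2) ≤ √(x - (M : ℝ) ^ 2) := sqrt_le_sqrt (by linarith)
  have hlast1 : √(x - (M : ℝ) ^ 2) ≤ M + 2 := sqrt_le_iff.2 ⟨by linarith, by nlinarith⟩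
  rw [hsum]
  constructor <;> nlinarith

end EighthDisc

lemma card_add_card_sq_eq_two_mul_of_swap {α : Type*} [DecidableEq α] {S : Finset (α × α)}
    {T : Finset α} (hswap : ∀ p ∈ S, p.swap ∈ S) (hTS : T ×ˢ T ⊆ S)
    (hST : ∀ p ∈ S, p.1 ∈ T ∨ p.2 ∈ T) :
    S.card + T.card ^ 2 = 2 * {p ∈ S | p.1 ∈ T}.card := by
  have hflip : {p ∈ S | p.2 ∈ T}.card = {p ∈ S | p.1 ∈ T}.card :=
    Finset.card_nbij' Prod.swap Prod.swap (fun p hp ↦ by simp_all) (fun p hp ↦ by simp_all)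
      (fun p _ ↦ p.swap_swap) fun p _ ↦ p.swap_swap
  have hunion : {p ∈ S | p.1 ∈ T} ∪ {p ∈ S | p.2 ∈ T} = S := by
    rw [← Finset.filter_or]
    exact Finset.filter_true_of_mem hST
  have hinter : {p ∈ S | p.1 ∈ T} ∩ {p ∈ S | p.2 ∈ T} = T ×ˢ T := by
    ext p
    have := @hTS p
    simp only [Finset.mem_inter, Finset.mem_filter, Finset.mem_product] at this ⊢
    tauto
  have := Finset.card_union_add_card_inter {p ∈ S | p.1 ∈ T} {p ∈ S | p.2 ∈ T}
  rw [hunion, hinter, hflip, Finset.card_product] at this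
  linarith

/-- The lattice points of the closed quarter disc of radius `√x`. -/
noncomputable def quarterDisc (x : ℝ) : Finset (ℕ × ℕ) :=
  {p ∈ Finset.range (⌊√x⌋₊ + 1) ×ˢ Finset.range (⌊√x⌋₊ + 1) | (p.1 : ℝ) ^ 2 + (p.2 : ℝ) ^ 2 ≤ x}

section QuarterDisc

variable {x : ℝ}

lemma mem_quarterDisc {p : ℕ × ℕ} : p ∈ quarterDisc x ↔ (p.1 : ℝ) ^ 2 + (p.2 : ℝ) ^ 2 ≤ x := by
  simp only [quarterDisc, Finset.mem_filter, Finset.mem_product, Finset.mem_range,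
    Nat.lt_succ_iff, and_iff_right_iff_imp]
  intro hp
  exact ⟨Nat.le_floor (le_sqrt_of_sq_le (by nlinarith)),
    Nat.le_floor (le_sqrt_of_sq_le (by nlinarith))⟩

lemma card_filter_quarterDisc_fst_eq {a : ℕ} (ha : (a : ℝ) ^ 2 ≤ x) :
    {p ∈ quarterDisc x | p.1 = a}.card = ⌊√(x - (a : ℝ) ^ 2)⌋₊ + 1 := by
  have hcolumn : {p ∈ quarterDisc x | p.1 = a}
      = {a} ×ˢ Finset.range (⌊√(x - (a : ℝ) ^ 2)⌋₊ + 1) := by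
    ext ⟨c, b⟩
    rw [Finset.mem_filter, mem_quarterDisc, Finset.mem_product, Finset.mem_singleton,
      Finset.mem_range, Nat.lt_succ_iff, Nat.le_floor_iff (sqrt_nonneg _),
      le_sqrt b.cast_nonneg (by linarith), and_comm]
    refine and_congr_right fun hc ↦ ?_
    rw [show c = a from hc, le_sub_iff_add_le']
  rw [hcolumn, Finset.card_product, Finset.card_singleton, Finset.card_range, one_mul]

lemma card_filter_quarterDisc_fst_pos_add (hx : 0 ≤ x) :
    {p ∈ quarterDisc x | 0 < p.1}.card + (⌊√x⌋₊ + 1) = (quarterDisc x).card := by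
  rw [← Finset.card_filter_add_card_filter_not (s := quarterDisc x) fun p ↦ 0 < p.1]
  simp only [Nat.pos_iff_ne_zero, not_not]
  rw [card_filter_quarterDisc_fst_eq (by simpa using hx)]
  simp

lemma card_quarterDisc_add_sq {M : ℕ} (hx : 0 ≤ x) (hM : (M : ℝ) ≤ √(x / 2))
    (hM1 : √(x / 2) < M + 1) :
    (quarterDisc x).card + (M + 1) ^ 2
      = 2 * ∑ a ∈ Finset.range (M + 1), (⌊√(x - (a : ℝ) ^ 2)⌋₊ + 1) := by
  have hhalf : √(x / 2) ^ 2 = x / 2 := sq_sqrt (by linarith)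
  have hsq {a : ℕ} (ha : a ∈ Finset.range (M + 1)) : (a : ℝ) ^ 2 ≤ x / 2 := by
    have : (a : ℝ) ≤ M := by exact_mod_cast Finset.mem_range_succ_iff.1 ha
    rw [← hhalf]
    gcongr
    exact this.trans hM
  have hswap := card_add_card_sq_eq_two_mul_of_swap (S := quarterDisc x)
    (T := Finset.range (M + 1)) (fun p hp ↦ ?_) (fun p hp ↦ ?_) fun p hp ↦ ?_
  · rw [Finset.card_range] at hswap
    rw [hswap, Finset.card_eq_sum_card_fiberwise (f := Prod.fst) (t := Finset.range (M + 1))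
      (by simp [Set.MapsTo])]
    congr 1
    refine Finset.sum_congr rfl fun a ha ↦ ?_
    rw [← card_filter_quarterDisc_fst_eq (by linarith [hsq ha]), Finset.filter_filter]
    congr 1
    ext p
    grind
  · rw [mem_quarterDisc] at hp ⊢
    rwa [add_comm]
  · rw [Finset.mem_product] at hp
    rw [mem_quarterDisc]
    linarith [hsq hp.1, hsq hp.2]
  · by_contra! hlarge
    simp only [Finset.mem_range, not_lt] at hlarge
    rw [mem_quarterDisc] at hp
    have h1 : (M : ℝ) + 1 ≤ p.1 := by exact_mod_cast hlarge.1
    have h2 : (M : ℝ) + 1 ≤ p.2 := by exact_mod_cast hlarge.2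
    nlinarith [sqrt_nonneg (x / 2)]

lemma natCast_floor_eq_sub_sawtooth {t : ℝ} (ht : 0 ≤ t) : (⌊t⌋₊ : ℝ) = t - 1 / 2 - sawtooth t := by
  rw [natCast_floor_eq_intCast_floor ht, sawtooth]
  linarith [Int.floor_add_fract t]

theorem abs_card_filter_quarterDisc_fst_pos_sub_le (hx : 1 ≤ x) :
    |({p ∈ quarterDisc x | 0 < p.1}.card : ℝ) - π / 4 * x| ≤ 130 * x ^ (1 / 3 : ℝ) := by
  have hx0 : 0 ≤ x := by linarith
  obtain ⟨M, hM, hM1⟩ : ∃ M : ℕ, (M : ℝ) ≤ √(x / 2) ∧ √(x / 2) < M + 1 :=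
    ⟨⌊√(x / 2)⌋₊, Nat.floor_le (sqrt_nonneg _), Nat.lt_floor_add_one _⟩
  have hMsq : 2 * (M : ℝ) ^ 2 ≤ x := by
    have := (le_sqrt M.cast_nonneg (by linarith)).1 hM
    linarith
  have hcount : ({p ∈ quarterDisc x | 0 < p.1}.card : ℝ)
      = 2 * ∑ a ∈ Finset.range (M + 1), (⌊√(x - (a : ℝ) ^ 2)⌋₊ : ℝ) - M ^ 2 - ⌊√x⌋₊ := by
    have haxis := card_filter_quarterDisc_fst_pos_add hx0
    have hdiag := card_quarterDisc_add_sq hx0 hM hM1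
    rw [← haxis, Finset.sum_add_distrib, Finset.sum_const, Finset.card_range, smul_eq_mul] at hdiag
    have := congrArg (Nat.cast (R := ℝ)) hdiag
    push_cast at this
    linarith
  simp only [natCast_floor_eq_sub_sawtooth (sqrt_nonneg _), Finset.sum_sub_distrib,
    Finset.sum_const, Finset.card_range, nsmul_eq_mul] at hcount
  push_cast at hcount
  obtain ⟨hsum0, hsum1⟩ := two_mul_sum_sqrt_sub_sq_sub_mem_Icc hx hM hM1
  obtain ⟨hsaw0, hsaw1⟩ := abs_le.1 (abs_sum_sawtooth_sqrt_sub_sq_le hx hMsq)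
  have hfract0 : -(1 / 2) ≤ sawtooth √x := by linarith [Int.fract_nonneg √x, sawtooth.eq_1 √x]
  have hfract1 : sawtooth √x ≤ 1 / 2 := by linarith [Int.fract_lt_one √x, sawtooth.eq_1 √x]
  have hpow : 1 ≤ x ^ (1 / 3 : ℝ) := one_le_rpow hx (by norm_num)
  rw [abs_le, hcount]
  constructor <;> linarith

end QuarterDisc

section Moebius

open UniqueFactorizationMonoid

variable {α : Type*} [CommMonoidWithZero α] [UniqueFactorizationMonoid α]

lemma abs_moebius_le_one (a : α) : |moebius a| ≤ 1 := by
  by_cases ha : Squarefree a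
  · rw [ha.moebius_eq, abs_neg_one_pow]
  · simp [moebius_of_not_squarefree ha]

lemma normalizedFactors_finset_prod_of_prime [Subsingleton αˣ] {T : Finset α}
    (hT : ∀ p ∈ T, Prime p) : normalizedFactors (∏ p ∈ T, p) = T.val := by
  rw [Finset.prod_eq_multiset_prod, Multiset.map_id', normalizedFactors_prod_of_prime hT]

lemma squarefree_finset_prod_of_prime [Nontrivial α] [Subsingleton αˣ] {T : Finset α}
    (hT : ∀ p ∈ T, Prime p) : Squarefree (∏ p ∈ T, p) := by
  have hne : ∏ p ∈ T, p ≠ 0 := Finset.prod_ne_zero_iff.2 fun p hp ↦ (hT p hp).ne_zero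
  rw [squarefree_iff_nodup_normalizedFactors hne, normalizedFactors_finset_prod_of_prime hT]
  exact T.nodup

lemma moebius_finset_prod_of_prime [Nontrivial α] [Subsingleton αˣ] {T : Finset α}
    (hT : ∀ p ∈ T, Prime p) : moebius (∏ p ∈ T, p) = (-1) ^ T.card := by
  rw [(squarefree_finset_prod_of_prime hT).moebius_eq, ← Multiset.card_map normalize,
    ← normalizedFactors, normalizedFactors_finset_prod_of_prime hT, Finset.card_val]

lemma prod_toFinset_normalizedFactors [Nontrivial α] [Subsingleton αˣ] [DecidableEq α] {a : α}
    (ha : Squarefree a) : ∏ p ∈ (normalizedFactors a).toFinset, p = a := by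
  have hnodup := (squarefree_iff_nodup_normalizedFactors ha.ne_zero).1 ha
  rw [Finset.prod_eq_multiset_prod, Multiset.toFinset_val, hnodup.dedup, Multiset.map_id',
    prod_normalizedFactors_eq ha.ne_zero, normalize_eq]

lemma sum_moebius_eq_sum_powerset [Subsingleton αˣ] [DecidableEq α] {a : α} (ha : a ≠ 0)
    {s : Finset α} (hs : ∀ d, d ∈ s ↔ d ∣ a) :
    ∑ d ∈ s, moebius d = ∑ T ∈ (normalizedFactors a).toFinset.powerset, (-1) ^ T.card := by
  classical
  have : Nontrivial α := ⟨a, 0, ha⟩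
  have hprime {b : α} : ∀ p ∈ (normalizedFactors b).toFinset, Prime p :=
    fun p hp ↦ prime_of_normalized_factor p (Multiset.mem_toFinset.1 hp)
  have hprime_subset {T} (hT : T ∈ (normalizedFactors a).toFinset.powerset) : ∀ p ∈ T, Prime p :=
    fun p hp ↦ hprime p (Finset.mem_powerset.1 hT hp)
  have hsquarefree : ∑ d ∈ s, moebius d = ∑ d ∈ s with Squarefree d, moebius d :=
    (Finset.sum_filter_of_ne fun d _ hd ↦
      of_not_not fun hsq ↦ hd (moebius_of_not_squarefree hsq)).symm
  rw [hsquarefree]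
  refine Finset.sum_bij' (fun d _ ↦ (normalizedFactors d).toFinset) (fun T _ ↦ ∏ p ∈ T, p)
    (fun d hd ↦ ?_) (fun T hT ↦ ?_) (fun d hd ↦ ?_) (fun T hT ↦ ?_) fun d hd ↦ ?_
  · rw [Finset.mem_filter, hs] at hd
    exact Finset.mem_powerset.2 <| Multiset.toFinset_subset.2 <| Multiset.subset_of_le <|
      (dvd_iff_normalizedFactors_le_normalizedFactors hd.2.ne_zero ha).1 hd.1
  · have hsq := squarefree_finset_prod_of_prime (hprime_subset hT)
    rw [Finset.mem_filter, hs, dvd_iff_normalizedFactors_le_normalizedFactors hsq.ne_zero ha,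
      normalizedFactors_finset_prod_of_prime (hprime_subset hT), Multiset.le_iff_subset T.nodup]
    exact ⟨fun p hp ↦ Multiset.mem_toFinset.1 (Finset.mem_powerset.1 hT hp), hsq⟩
  · exact prod_toFinset_normalizedFactors (Finset.mem_filter.1 hd).2
  · rw [normalizedFactors_finset_prod_of_prime (hprime_subset hT), Finset.val_toFinset]
  · rw [← moebius_finset_prod_of_prime hprime,
      prod_toFinset_normalizedFactors (Finset.mem_filter.1 hd).2]

theorem sum_moebius_eq_ite [Subsingleton αˣ] [DecidableEq α] {a : α} (ha : a ≠ 0) {s : Finset α}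
    (hs : ∀ d, d ∈ s ↔ d ∣ a) : ∑ d ∈ s, moebius d = if a = 1 then 1 else 0 := by
  have hempty : (normalizedFactors a).toFinset = ∅ ↔ a = 1 := by
    rw [Multiset.toFinset_eq_empty]
    exact ⟨fun h ↦ by rw [← normalize_eq a, ← prod_normalizedFactors_eq ha, h, Multiset.prod_zero],
      fun h ↦ h ▸ normalizedFactors_one⟩
  rw [sum_moebius_eq_sum_powerset ha hs, Finset.sum_powerset_neg_one_pow_card]
  simp only [hempty]

end Moebius

/-- A norm making a commutative monoid with zero into an arithmetical semigroup in the sense of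
Knopfmacher: only finitely many elements have bounded norm. The motivating example is the absolute
norm on the ideals of a ring of integers. -/
structure IsArithmeticNorm {α : Type*} [CommMonoidWithZero α] (N : α →*₀ ℕ) : Prop where
  eq_zero_of_norm_eq_zero : ∀ a, N a = 0 → a = 0
  finite_norm_le : ∀ n, {a | N a ≤ n}.Finite

namespace IsArithmeticNorm

open UniqueFactorizationMonoid

variable {α : Type*} [CommMonoidWithZero α] {N : α →*₀ ℕ} {x : ℝ} {a b : α}

/-- The nonzero elements of norm at most `x`. The cardinality of this set is the counting function
of the arithmetical semigroup. -/
noncomputable def normLE (hN : IsArithmeticNorm N) (x : ℝ) : Finset α :=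
  ((hN.finite_norm_le ⌊x⌋₊).sdiff (t := {0})).toFinset

lemma norm_ne_zero (hN : IsArithmeticNorm N) (ha : a ≠ 0) : N a ≠ 0 :=
  mt (hN.eq_zero_of_norm_eq_zero a) ha

lemma norm_pos (hN : IsArithmeticNorm N) (ha : a ≠ 0) : (0 : ℝ) < N a :=
  Nat.cast_pos.2 (hN.norm_ne_zero ha).bot_lt

lemma one_le_norm (hN : IsArithmeticNorm N) (ha : a ≠ 0) : (1 : ℝ) ≤ N a :=
  Nat.one_le_cast.2 (hN.norm_ne_zero ha).bot_lt

lemma mem_normLE {hN : IsArithmeticNorm N} : a ∈ hN.normLE x ↔ a ≠ 0 ∧ (N a : ℝ) ≤ x := by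
  rw [normLE, Set.Finite.mem_toFinset, Set.mem_sdiff, and_comm]
  exact and_congr_right fun ha ↦ Nat.le_floor_iff' (hN.norm_ne_zero ha)

lemma normLE_eq_empty {hN : IsArithmeticNorm N} (hx : x < 1) : hN.normLE x = ∅ :=
  Finset.eq_empty_of_forall_notMem fun _ ha ↦
    ((hN.one_le_norm (mem_normLE.1 ha).1).trans (mem_normLE.1 ha).2).not_gt hx

lemma mem_normLE_of_dvd {hN : IsArithmeticNorm N} (hb : b ∈ hN.normLE x) (hab : a ∣ b) :
    a ∈ hN.normLE x := by
  rw [mem_normLE] at hb ⊢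
  exact ⟨ne_zero_of_dvd_ne_zero hb.1 hab, le_trans
    (Nat.cast_le.2 (Nat.le_of_dvd (hN.norm_ne_zero hb.1).bot_lt (map_dvd N hab))) hb.2⟩

variable [UniqueFactorizationMonoid α]

lemma mul_mem_normLE_iff {hN : IsArithmeticNorm N} (ha : a ≠ 0) :
    a * b ∈ hN.normLE x ↔ b ∈ hN.normLE (x / N a) := by
  rw [mem_normLE, mem_normLE, mul_ne_zero_iff, map_mul, Nat.cast_mul, le_div_iff₀' (hN.norm_pos ha),
    and_iff_right ha]

lemma card_filter_dvd_normLE (hN : IsArithmeticNorm N) [DecidablePred (a ∣ ·)] (ha : a ≠ 0) :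
    {b ∈ hN.normLE x | a ∣ b}.card = (hN.normLE (x / N a)).card := by
  have himage : ({b ∈ hN.normLE x | a ∣ b} : Set α) = (a * ·) '' hN.normLE (x / N a) := by
    ext b
    constructor
    · rintro ⟨hb, c, rfl⟩
      exact ⟨c, (mul_mem_normLE_iff ha).1 hb, rfl⟩
    · rintro ⟨c, hc, rfl⟩
      exact ⟨(mul_mem_normLE_iff ha).2 hc, dvd_mul_right a c⟩
  rw [← Set.ncard_coe_finset, Finset.coe_filter]
  exact (congrArg Set.ncard himage).trans <|
    (Set.ncard_image_of_injective _ (mul_right_injective₀ ha)).trans (Set.ncard_coe_finset _)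

variable [Subsingleton αˣ]

lemma sum_moebius_filter_dvd_and_dvd {hN : IsArithmeticNorm N} [DecidablePred fun d ↦ d ∣ a ∧ d ∣ b]
    [Decidable (IsRelPrime a b)] (ha : a ∈ hN.normLE x) :
    ∑ d ∈ hN.normLE x with d ∣ a ∧ d ∣ b, moebius d = if IsRelPrime a b then 1 else 0 := by
  classical
  let _ := UniqueFactorizationMonoid.toGCDMonoid α
  have hgcd : gcd a b ≠ 0 := fun h ↦ (mem_normLE.1 ha).1 ((gcd_eq_zero_iff a b).1 h).1
  rw [sum_moebius_eq_ite hgcd]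
  · simp only [← gcd_isUnit_iff_isRelPrime, isUnit_iff_eq_one]
  · intro d
    rw [Finset.mem_filter, dvd_gcd_iff, and_iff_right_iff_imp]
    exact fun hd ↦ mem_normLE_of_dvd ha hd.1

theorem ncard_isRelPrime_eq_sum_moebius (hN : IsArithmeticNorm N) (x : ℝ) :
    ({p ∈ (hN.normLE x : Set α) ×ˢ (hN.normLE x : Set α) | IsRelPrime p.1 p.2}.ncard : ℤ)
      = ∑ d ∈ hN.normLE x, moebius d * (hN.normLE (x / N d)).card ^ 2 := by
  classical
  have hcoe : {p ∈ (hN.normLE x : Set α) ×ˢ (hN.normLE x : Set α) | IsRelPrime p.1 p.2}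
      = ({p ∈ hN.normLE x ×ˢ hN.normLE x | IsRelPrime p.1 p.2} : Finset (α × α)) := by
    rw [Finset.coe_filter, ← Finset.coe_product]
    rfl
  calc _ = ∑ p ∈ hN.normLE x ×ˢ hN.normLE x, if IsRelPrime p.1 p.2 then (1 : ℤ) else 0 := by
        rw [hcoe, Set.ncard_coe_finset, Finset.natCast_card_filter]
    _ = ∑ p ∈ hN.normLE x ×ˢ hN.normLE x,
          ∑ d ∈ hN.normLE x with d ∣ p.1 ∧ d ∣ p.2, moebius d :=
        Finset.sum_congr rfl fun p hp ↦
          (sum_moebius_filter_dvd_and_dvd (Finset.mem_product.1 hp).1).symm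
    _ = ∑ d ∈ hN.normLE x,
          ∑ _p ∈ {a ∈ hN.normLE x | d ∣ a} ×ˢ {a ∈ hN.normLE x | d ∣ a}, moebius d :=
        Finset.sum_comm' fun p d ↦ by simp only [Finset.mem_product, Finset.mem_filter]; tauto
    _ = _ := Finset.sum_congr rfl fun d hd ↦ by
        rw [Finset.sum_const, Finset.card_product, card_filter_dvd_normLE hN (mem_normLE.1 hd).1,
          nsmul_eq_mul, mul_comm, Nat.cast_mul, sq]

end IsArithmeticNorm

/-- The zeta function `∑ (N a)⁻ˢ` of an arithmetical semigroup. The zero element contributes nothing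
for `s ≠ 0`, as then `0 ^ (-s) = 0`. -/
noncomputable def normZeta {α : Type*} [CommMonoidWithZero α] (N : α →*₀ ℕ) (s : ℝ) : ℝ :=
  ∑' a, (N a : ℝ) ^ (-s)

lemma zero_norm_rpow_neg {α : Type*} [CommMonoidWithZero α] (N : α →*₀ ℕ) {s : ℝ} (hs : s ≠ 0) :
    (N 0 : ℝ) ^ (-s) = 0 := by
  rw [map_zero, Nat.cast_zero, zero_rpow (neg_ne_zero.2 hs)]

namespace IsArithmeticNorm

open UniqueFactorizationMonoid

variable {α : Type*} [CommMonoidWithZero α] {N : α →*₀ ℕ} {s : ℝ}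

lemma sum_card_norm_eq (hN : IsArithmeticNorm N) (n : ℕ) :
    ∑ k ∈ Finset.Icc 1 n, Nat.card {a // N a = k} = (hN.normLE n).card := by
  classical
  have hmaps : Set.MapsTo N (hN.normLE n) (Finset.Icc 1 n) := fun a ha ↦
    have ha := mem_normLE.1 ha
    Finset.mem_coe.2 <| Finset.mem_Icc.2 ⟨(hN.norm_ne_zero ha.1).bot_lt, Nat.cast_le.1 ha.2⟩
  rw [Finset.card_eq_sum_card_fiberwise hmaps]
  refine Finset.sum_congr rfl fun k hk ↦ Nat.subtype_card _ fun a ↦ ?_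
  rw [Finset.mem_Icc] at hk
  rw [Finset.mem_filter, mem_normLE, and_iff_right_iff_imp]
  rintro rfl
  refine ⟨?_, Nat.cast_le.2 hk.2⟩
  rintro rfl
  exact one_ne_zero (Nat.le_zero.1 (map_zero N ▸ hk.1))

theorem summable_norm_rpow_neg (hN : IsArithmeticNorm N) {r : ℝ} (hr : 0 ≤ r) (hrs : r < s)
    (hcount : (fun n : ℕ ↦ ((hN.normLE n).card : ℝ)) =O[Filter.atTop] fun n ↦ (n : ℝ) ^ r) :
    Summable fun a ↦ (N a : ℝ) ^ (-s) := by
  have hfinite (n : ℕ) : Finite {a // N a = n} :=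
    (hN.finite_norm_le n).subset fun _ ha ↦ ha.le
  have hseries : LSeriesSummable (fun n ↦ ((Nat.card {a // N a = n} : ℝ) : ℂ)) s := by
    refine LSeriesSummable_of_sum_norm_bigO_and_nonneg (r := r) ?_ (fun _ ↦ Nat.cast_nonneg _) hr
      hrs
    simpa only [← Nat.cast_sum, hN.sum_card_norm_eq] using hcount
  rw [← (Equiv.sigmaFiberEquiv N).summable_iff,
    summable_sigma_of_nonneg (f := (fun a ↦ (N a : ℝ) ^ (-s)) ∘ Equiv.sigmaFiberEquiv N)
      fun _ ↦ rpow_nonneg (Nat.cast_nonneg _) _]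
  refine ⟨fun n ↦ Summable.of_finite, hseries.norm.congr fun n ↦ ?_⟩
  have hfiber :
      ∑' a : {a // N a = n}, (N a : ℝ) ^ (-s) = Nat.card {a // N a = n} * (n : ℝ) ^ (-s) := by
    rw [← nsmul_eq_mul, ← tsum_const]
    exact tsum_congr fun a ↦ by rw [a.2]
  rw [LSeries.norm_term_eq]
  refine Eq.trans ?_ hfiber.symm
  split_ifs with hn
  · rw [hn, Nat.cast_zero, zero_rpow (neg_ne_zero.2 (hr.trans_lt hrs).ne'), mul_zero]
  · rw [Complex.norm_real, norm_of_nonneg (Nat.cast_nonneg _), Complex.ofReal_re,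
      rpow_neg (Nat.cast_nonneg n), div_eq_mul_inv]

variable [UniqueFactorizationMonoid α]

lemma summable_moebius_mul_norm_rpow_neg (hsum : Summable fun a ↦ (N a : ℝ) ^ (-s)) :
    Summable fun a ↦ (moebius a : ℝ) * (N a : ℝ) ^ (-s) := by
  refine hsum.of_norm_bounded fun a ↦ ?_
  rw [norm_mul, norm_of_nonneg (rpow_nonneg (Nat.cast_nonneg _) _)]
  exact mul_le_of_le_one_left (rpow_nonneg (Nat.cast_nonneg _) _)
    (by rw [norm_eq_abs]; exact_mod_cast abs_moebius_le_one a)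

variable [Subsingleton αˣ]

lemma tsum_subtype_dvd_moebius [DecidableEq α] (hN : IsArithmeticNorm N) {a : α} (ha : a ≠ 0) :
    ∑' d : {d // d ∣ a}, (moebius (d : α) : ℝ) = if a = 1 then 1 else 0 := by
  classical
  have hmem (d : α) : d ∈ {d ∈ hN.normLE (N a) | d ∣ a} ↔ d ∣ a := by
    rw [Finset.mem_filter, and_iff_right_iff_imp]
    exact mem_normLE_of_dvd (mem_normLE.2 ⟨ha, le_rfl⟩)
  calc ∑' d : {d // d ∣ a}, (moebius (d : α) : ℝ)
      = ∑' d : ({d ∈ hN.normLE (N a) | d ∣ a} : Finset α), (moebius (d : α) : ℝ) :=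
        ((Equiv.subtypeEquivRight hmem).tsum_eq fun d ↦ (moebius (d : α) : ℝ)).symm
    _ = ((∑ d ∈ hN.normLE (N a) with d ∣ a, moebius d : ℤ) : ℝ) := by
        rw [Finset.tsum_subtype _ fun d ↦ (moebius d : ℝ), Int.cast_sum]
    _ = _ := by rw [sum_moebius_eq_ite ha hmem]; push_cast; rfl

lemma tsum_mul_fiber_moebius [DecidableEq α] (hN : IsArithmeticNorm N) (hs : s ≠ 0) (a : α) :
    ∑' p : (fun p : α × α ↦ p.1 * p.2) ⁻¹' {a},
        (moebius p.1.1 * (N p.1.1 : ℝ) ^ (-s)) * (N p.1.2 : ℝ) ^ (-s)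
      = if a = 1 then 1 else 0 := by
  have hterm (p : (fun p : α × α ↦ p.1 * p.2) ⁻¹' {a}) :
      (moebius p.1.1 * (N p.1.1 : ℝ) ^ (-s)) * (N p.1.2 : ℝ) ^ (-s)
        = moebius p.1.1 * (N a : ℝ) ^ (-s) := by
    have hp : p.1.1 * p.1.2 = a := p.2
    rw [mul_assoc, ← mul_rpow (Nat.cast_nonneg _) (Nat.cast_nonneg _), ← Nat.cast_mul, ← map_mul,
      hp]
  rw [tsum_congr hterm, tsum_mul_right]
  rcases eq_or_ne a 0 with rfl | ha
  · have : Nontrivial α := ⟨0, 1, fun h ↦ zero_ne_one (α := ℕ) (by simpa using congrArg N h)⟩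
    rw [zero_norm_rpow_neg N hs, mul_zero, if_neg zero_ne_one]
  have hbij : Function.Bijective fun p : (fun p : α × α ↦ p.1 * p.2) ⁻¹' {a} ↦
      (⟨p.1.1, p.1.2, p.2.symm⟩ : {d // d ∣ a}) := by
    refine ⟨?_, fun ⟨d, b, h⟩ ↦ ⟨⟨(d, b), h.symm⟩, rfl⟩⟩
    rintro ⟨⟨d, b⟩, hb : d * b = a⟩ ⟨⟨d', b'⟩, hb' : d' * b' = a⟩ h
    obtain rfl : d = d' := congrArg Subtype.val h
    obtain rfl : b = b' := mul_left_cancel₀ (left_ne_zero_of_mul (hb ▸ ha)) (hb.trans hb'.symm)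
    rfl
  have hdvd := (Equiv.ofBijective _ hbij).tsum_eq fun d ↦ (moebius (d : α) : ℝ)
  rw [hN.tsum_subtype_dvd_moebius ha] at hdvd
  refine (congrArg (· * _) hdvd).trans ?_
  split_ifs with h
  · rw [h, map_one, Nat.cast_one, one_rpow, mul_one]
  · exact zero_mul _

theorem tsum_moebius_mul_normZeta (hN : IsArithmeticNorm N) (hs : s ≠ 0)
    (hsum : Summable fun a ↦ (N a : ℝ) ^ (-s)) :
    (∑' a, (moebius a : ℝ) * (N a : ℝ) ^ (-s)) * normZeta N s = 1 := by
  classical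
  have hmoebius := summable_moebius_mul_norm_rpow_neg hsum
  rw [normZeta, tsum_mul_tsum_of_summable_norm hmoebius.norm hsum.norm]
  have hfiber := (summable_mul_of_summable_norm hmoebius.norm hsum.norm).hasSum.tsum_fiberwise
    fun p : α × α ↦ p.1 * p.2
  simp only [hN.tsum_mul_fiber_moebius hs] at hfiber
  exact hfiber.unique (hasSum_ite_eq 1 1)

end IsArithmeticNorm

lemma abs_sq_sub_sq_le_mul_rpow {f : ℝ → ℝ} {κ K θ y : ℝ} (hf : ∀ y < 1, f y = 0) (hθ : θ ≤ 1)
    (hK : ∀ y, 1 ≤ y → |f y - κ * y| ≤ K * y ^ θ) (hy : 0 < y) :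
    |f y ^ 2 - (κ * y) ^ 2| ≤ (K * (K + 2 * |κ|) + κ ^ 2) * y ^ (1 + θ) := by
  have hK0 : 0 ≤ K := by simpa using (abs_nonneg _).trans (hK 1 le_rfl)
  rcases lt_or_ge y 1 with hy1 | hy1
  · have hsq : y ^ 2 ≤ y ^ (1 + θ) := by
      rw [← rpow_two]
      exact rpow_le_rpow_of_exponent_ge hy hy1.le (by linarith)
    rw [hf y hy1, zero_pow two_ne_zero, zero_sub, abs_neg, abs_sq, mul_pow]
    exact mul_le_mul (le_add_of_nonneg_left (by positivity)) hsq (by positivity) (by positivity)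
  · have hpow : y ^ θ ≤ y := by simpa using rpow_le_rpow_of_exponent_le hy1 hθ
    have hsum : |f y + κ * y| ≤ (K + 2 * |κ|) * y := calc
      |f y + κ * y| = |(f y - κ * y) + 2 * (κ * y)| := by ring_nf
      _ ≤ |f y - κ * y| + |2 * (κ * y)| := abs_add_le _ _
      _ ≤ K * y + 2 * |κ| * y := by
        rw [abs_mul, abs_mul, abs_two, abs_of_pos hy, mul_assoc]
        gcongr
        exact (hK y hy1).trans (by gcongr)
      _ = (K + 2 * |κ|) * y := by ring
    calc |f y ^ 2 - (κ * y) ^ 2| = |f y + κ * y| * |f y - κ * y| := by rw [sq_sub_sq, abs_mul]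
      _ ≤ (K + 2 * |κ|) * y * (K * y ^ θ) := by gcongr; exact hK y hy1
      _ = K * (K + 2 * |κ|) * y ^ (1 + θ) := by rw [rpow_add hy, rpow_one]; ring
      _ ≤ (K * (K + 2 * |κ|) + κ ^ 2) * y ^ (1 + θ) := by
        gcongr
        exact le_add_of_nonneg_right (sq_nonneg κ)

namespace IsArithmeticNorm

open UniqueFactorizationMonoid

variable {α : Type*} [CommMonoidWithZero α] {N : α →*₀ ℕ} {κ K θ s x : ℝ}

lemma summable_norm_rpow_neg_of_one_lt (hN : IsArithmeticNorm N) (hθ : θ ≤ 1) (hs : 1 < s)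
    (hK : ∀ y, 1 ≤ y → |((hN.normLE y).card : ℝ) - κ * y| ≤ K * y ^ θ) :
    Summable fun a ↦ (N a : ℝ) ^ (-s) := by
  have hK0 : 0 ≤ K := by simpa using (abs_nonneg _).trans (hK 1 le_rfl)
  refine hN.summable_norm_rpow_neg zero_le_one hs <| Asymptotics.IsBigO.of_bound (K + |κ|) ?_
  filter_upwards [Filter.eventually_ge_atTop 1] with n hn
  have hn1 : (1 : ℝ) ≤ n := Nat.one_le_cast.2 hn
  have hpow : (n : ℝ) ^ θ ≤ n := by simpa using rpow_le_rpow_of_exponent_le hn1 hθ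
  rw [rpow_one, norm_natCast, norm_natCast]
  calc ((hN.normLE n).card : ℝ) ≤ κ * n + K * n ^ θ := by
        linarith [le_of_abs_le (hK n hn1)]
    _ ≤ |κ| * n + K * n := by gcongr; exact le_abs_self κ
    _ = (K + |κ|) * n := by ring

variable [UniqueFactorizationMonoid α]

lemma abs_moebius_mul_sq_card_sub_le (hN : IsArithmeticNorm N) (hθ0 : 0 ≤ θ) (hθ : θ ≤ 1)
    (hK : ∀ y, 1 ≤ y → |((hN.normLE y).card : ℝ) - κ * y| ≤ K * y ^ θ) (hx : 0 < x) (d : α) :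
    |(moebius d : ℝ) * ((hN.normLE (x / N d)).card : ℝ) ^ 2 - moebius d * (κ * x / N d) ^ 2|
      ≤ (K * (K + 2 * |κ|) + κ ^ 2) * x ^ (1 + θ) * (N d : ℝ) ^ (-(1 + θ)) := by
  have hzero (y : ℝ) (hy : y < 1) : ((hN.normLE y).card : ℝ) = 0 := by
    rw [normLE_eq_empty hy, Finset.card_empty, Nat.cast_zero]
  rcases eq_or_ne d 0 with rfl | hd
  · rw [zero_norm_rpow_neg N (by linarith), map_zero, Nat.cast_zero, div_zero, div_zero,
      hzero 0 one_pos, sub_self, abs_zero, mul_zero]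
  have hmoebius : |(moebius d : ℝ)| ≤ 1 := by exact_mod_cast abs_moebius_le_one d
  calc |(moebius d : ℝ) * ((hN.normLE (x / N d)).card : ℝ) ^ 2 - moebius d * (κ * x / N d) ^ 2|
      = |(moebius d : ℝ)| * |((hN.normLE (x / N d)).card : ℝ) ^ 2 - (κ * (x / N d)) ^ 2| := by
        rw [← mul_sub, abs_mul, mul_div_assoc]
    _ ≤ |((hN.normLE (x / N d)).card : ℝ) ^ 2 - (κ * (x / N d)) ^ 2| :=
        mul_le_of_le_one_left (abs_nonneg _) hmoebius
    _ ≤ (K * (K + 2 * |κ|) + κ ^ 2) * (x / N d) ^ (1 + θ) :=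
        abs_sq_sub_sq_le_mul_rpow hzero hθ hK (div_pos hx (hN.norm_pos hd))
    _ = _ := by
        rw [div_rpow hx.le (Nat.cast_nonneg _), rpow_neg (Nat.cast_nonneg _)]
        ring

variable [Subsingleton αˣ]

lemma hasSum_moebius_mul_sq_card_normLE (hN : IsArithmeticNorm N) (x : ℝ) :
    HasSum (fun d ↦ (moebius d : ℝ) * ((hN.normLE (x / N d)).card : ℝ) ^ 2)
      {p ∈ (hN.normLE x : Set α) ×ˢ (hN.normLE x : Set α) | IsRelPrime p.1 p.2}.ncard := by
  have hncard := congrArg (Int.cast (R := ℝ)) (hN.ncard_isRelPrime_eq_sum_moebius x)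
  push_cast at hncard
  rw [hncard]
  refine hasSum_sum_of_ne_finset_zero fun d hd ↦ ?_
  have hlt : x / N d < 1 := by
    rcases eq_or_ne d 0 with rfl | hd0
    · rw [map_zero, Nat.cast_zero, div_zero]
      exact one_pos
    · rw [div_lt_one (hN.norm_pos hd0)]
      exact not_le.1 fun h ↦ hd (mem_normLE.2 ⟨hd0, h⟩)
  rw [normLE_eq_empty hlt, Finset.card_empty, Nat.cast_zero, zero_pow two_ne_zero, mul_zero]

lemma hasSum_moebius_mul_sq_div_norm (hN : IsArithmeticNorm N)
    (hsum : Summable fun a ↦ (N a : ℝ) ^ (-2 : ℝ)) (x : ℝ) :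
    HasSum (fun d ↦ (moebius d : ℝ) * (x / N d) ^ 2) (x ^ 2 / normZeta N 2) := by
  have hinv := eq_inv_of_mul_eq_one_left (hN.tsum_moebius_mul_normZeta two_ne_zero hsum)
  rw [div_eq_mul_inv, ← hinv]
  refine ((summable_moebius_mul_norm_rpow_neg hsum).hasSum.mul_left (x ^ 2)).congr_fun fun d ↦ ?_
  rw [rpow_neg (Nat.cast_nonneg _), rpow_two]
  ring

theorem abs_ncard_isRelPrime_sub_le (hN : IsArithmeticNorm N) (hθ0 : 0 < θ) (hθ : θ ≤ 1)
    (hK : ∀ y, 1 ≤ y → |((hN.normLE y).card : ℝ) - κ * y| ≤ K * y ^ θ) (hx : 0 < x) :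
    |({p ∈ (hN.normLE x : Set α) ×ˢ (hN.normLE x : Set α) | IsRelPrime p.1 p.2}.ncard : ℝ)
        - (κ * x) ^ 2 / normZeta N 2|
      ≤ (K * (K + 2 * |κ|) + κ ^ 2) * x ^ (1 + θ) * normZeta N (1 + θ) := by
  have hsum2 := hN.summable_norm_rpow_neg_of_one_lt hθ one_lt_two hK
  have hsumθ := hN.summable_norm_rpow_neg_of_one_lt hθ (lt_add_of_pos_right 1 hθ0) hK
  have hdiff := (hN.hasSum_moebius_mul_sq_card_normLE x).sub
    (hN.hasSum_moebius_mul_sq_div_norm hsum2 (κ * x))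
  rw [← hdiff.tsum_eq]
  exact tsum_of_norm_bounded (hsumθ.hasSum.mul_left _)
    fun d ↦ (norm_eq_abs _).trans_le (hN.abs_moebius_mul_sq_card_sub_le hθ0.le hθ hK hx d)

end IsArithmeticNorm

section DedekindDomain

variable {R : Type*} [CommRing R] [IsDedekindDomain R]

lemma ideal_isRelPrime_iff_sup_eq_top {I J : Ideal R} : IsRelPrime I J ↔ I ⊔ J = ⊤ := by
  rw [← gcd_isUnit_iff_isRelPrime, Ideal.isUnit_iff, Ideal.gcd_eq_sup]

variable [Module.Free ℤ R]

lemma normZeta_absNorm_eq_tsum_ne_bot {s : ℝ} (hs : s ≠ 0) :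
    normZeta (Ideal.absNorm : Ideal R →*₀ ℕ) s
      = ∑' I : {I : Ideal R // I ≠ ⊥}, (Ideal.absNorm I.1 : ℝ) ^ (-s) := by
  have hsupport :
      Function.support (fun I : Ideal R ↦ (Ideal.absNorm I : ℝ) ^ (-s)) ⊆ {I | I ≠ ⊥} := by
    rintro I hI rfl
    exact hI (zero_norm_rpow_neg Ideal.absNorm hs)
  exact (tsum_subtype_eq_of_support_subset hsupport).symm

variable (R) [CharZero R] [Module.Finite ℤ R]

lemma isArithmeticNorm_absNorm : IsArithmeticNorm (Ideal.absNorm : Ideal R →*₀ ℕ) where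
  eq_zero_of_norm_eq_zero _ := Ideal.absNorm_eq_zero_iff.1
  finite_norm_le := Ideal.finite_setOfPred_absNorm_le

end DedekindDomain

section Zsqrtd

/-- The `ℤ`-basis `1, √d` of `ℤ[√d]`. -/
noncomputable def zsqrtdBasis (d : ℤ) : Module.Basis (Fin 2) ℤ (ℤ√d) :=
  Module.Basis.ofEquivFun
    { toFun z := ![z.re, z.im]
      invFun v := ⟨v 0, v 1⟩
      left_inv _ := rfl
      right_inv v := by ext i; fin_cases i <;> rfl
      map_add' z w := by ext i; fin_cases i <;> rfl
      map_smul' c z := by ext i; fin_cases i <;> simp }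

instance (d : ℤ) : Module.Free ℤ (ℤ√d) := .of_basis (zsqrtdBasis d)

instance (d : ℤ) : Module.Finite ℤ (ℤ√d) := .of_basis (zsqrtdBasis d)

lemma algebraNorm_eq_zsqrtdNorm {d : ℤ} (z : ℤ√d) : Algebra.norm ℤ z = z.norm := by
  have hrepr (w : ℤ√d) (i : Fin 2) : (zsqrtdBasis d).repr w i = ![w.re, w.im] i := rfl
  have hone : zsqrtdBasis d 0 = ⟨1, 0⟩ := by
    rw [zsqrtdBasis, Module.Basis.coe_ofEquivFun]; ext <;> rfl
  have hsqrt : zsqrtdBasis d 1 = ⟨0, 1⟩ := by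
    rw [zsqrtdBasis, Module.Basis.coe_ofEquivFun]; ext <;> rfl
  rw [Algebra.norm_eq_matrix_det (zsqrtdBasis d), Matrix.det_fin_two]
  simp only [Algebra.leftMulMatrix_eq_repr_mul, hrepr, hone, hsqrt]
  simp [Zsqrtd.norm]

end Zsqrtd

section GaussianIdeals

variable {x : ℝ}

lemma natCast_absNorm_span_gaussianInt (z : GaussianInt) :
    (Ideal.absNorm (Ideal.span {z}) : ℝ) = (z.re : ℝ) ^ 2 + (z.im : ℝ) ^ 2 := by
  rw [Ideal.absNorm_span_singleton, algebraNorm_eq_zsqrtdNorm, GaussianInt.natCast_natAbs_norm,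
    Zsqrtd.norm_def]
  push_cast
  ring

lemma gaussianInt_isUnit_iff {u : GaussianInt} :
    IsUnit u ↔ u = ⟨1, 0⟩ ∨ u = ⟨-1, 0⟩ ∨ u = ⟨0, 1⟩ ∨ u = ⟨0, -1⟩ := by
  rw [← Zsqrtd.norm_eq_one_iff' (by norm_num), Zsqrtd.norm_def]
  refine ⟨fun h ↦ ?_, by rintro (rfl | rfl | rfl | rfl) <;> norm_num⟩
  obtain ⟨c, d⟩ := u
  replace h : c * c + d * d = 1 := by simpa using h
  obtain ⟨hc0, hc1⟩ : -1 ≤ c ∧ c ≤ 1 := ⟨by nlinarith, by nlinarith⟩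
  obtain ⟨hd0, hd1⟩ : -1 ≤ d ∧ d ≤ 1 := ⟨by nlinarith, by nlinarith⟩
  interval_cases c <;> interval_cases d <;> simp_all

lemma span_gaussianInt_eq_iff {w z : GaussianInt} :
    Ideal.span {w} = Ideal.span {z} ↔
      z = w ∨ z = ⟨-w.re, -w.im⟩ ∨ z = ⟨-w.im, w.re⟩ ∨ z = ⟨w.im, -w.re⟩ := by
  have hmul : Ideal.span {w} = Ideal.span {z} ↔ ∃ u : GaussianInt, IsUnit u ∧ z = w * u := by
    rw [Ideal.span_singleton_eq_span_singleton]
    exact ⟨fun ⟨u, hu⟩ ↦ ⟨u, u.isUnit, hu.symm⟩, fun ⟨u, hu, h⟩ ↦ ⟨hu.unit, h.symm⟩⟩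
  simp only [hmul, gaussianInt_isUnit_iff, or_and_right, exists_or, exists_eq_left]
  obtain ⟨a, b⟩ := w
  simp [Zsqrtd.ext_iff]

lemma exists_quadrant_rotate {a b : ℤ} (hab : a ≠ 0 ∨ b ≠ 0) : ∃ p : ℕ × ℕ, 0 < p.1 ∧
    (a = p.1 ∧ b = p.2 ∨ a = -p.1 ∧ b = -p.2 ∨ a = -p.2 ∧ b = p.1 ∨ a = p.2 ∧ b = -p.1) := by
  have : 0 < a ∧ 0 ≤ b ∨ a < 0 ∧ b ≤ 0 ∨ a ≤ 0 ∧ 0 < b ∨ 0 ≤ a ∧ b < 0 := by omega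
  rcases this with h | h | h | h
  · exact ⟨(a.toNat, b.toNat), by omega⟩
  · exact ⟨((-a).toNat, (-b).toNat), by omega⟩
  · exact ⟨(b.toNat, (-a).toNat), by omega⟩
  · exact ⟨((-b).toNat, a.toNat), by omega⟩

theorem bijOn_span_gaussianInt_quadrant :
    Set.BijOn (fun p : ℕ × ℕ ↦ Ideal.span {(⟨p.1, p.2⟩ : GaussianInt)}) {p | 0 < p.1}
      {I | I ≠ ⊥} := by
  refine ⟨?_, ?_, ?_⟩
  · rintro ⟨a, b⟩ (ha : 0 < a) (h : Ideal.span {_} = ⊥)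
    have hre : (a : ℤ) = 0 := congrArg Zsqrtd.re (Ideal.span_singleton_eq_bot.1 h)
    exact ha.ne' (Int.natCast_eq_zero.1 hre)
  · rintro ⟨a, b⟩ (ha : 0 < a) ⟨a', b'⟩ (ha' : 0 < a') h
    have := span_gaussianInt_eq_iff.1 h
    simp only [Zsqrtd.ext_iff] at this
    rw [Prod.mk.injEq]
    omega
  · intro I hI
    obtain ⟨⟨a, b⟩, rfl⟩ := (IsPrincipalIdealRing.principal I).principal
    obtain ⟨p, hp, hrotate⟩ := exists_quadrant_rotate (a := a) (b := b) <| by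
      by_contra! h
      exact hI (Ideal.span_singleton_eq_bot.2 (Zsqrtd.ext h.1 h.2))
    refine ⟨p, hp, span_gaussianInt_eq_iff.2 ?_⟩
    simpa only [Zsqrtd.ext_iff] using hrotate

lemma card_normLE_absNorm_gaussianInt :
    ((isArithmeticNorm_absNorm GaussianInt).normLE x).card
      = {p ∈ quarterDisc x | 0 < p.1}.card := by
  have hnorm (p : ℕ × ℕ) :
      (Ideal.absNorm (Ideal.span {(⟨p.1, p.2⟩ : GaussianInt)}) : ℝ) ≤ x ↔ p ∈ quarterDisc x := by
    rw [natCast_absNorm_span_gaussianInt, mem_quarterDisc, Int.cast_natCast, Int.cast_natCast]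
  have hbij := bijOn_span_gaussianInt_quadrant.inter_mapsTo (s₂ := quarterDisc x)
    (t₂ := {I | (Ideal.absNorm I : ℝ) ≤ x}) (fun p hp ↦ (hnorm p).2 hp) fun p hp ↦ (hnorm p).1 hp.2
  have hsource : {p : ℕ × ℕ | 0 < p.1} ∩ quarterDisc x
      = ({p ∈ quarterDisc x | 0 < p.1} : Finset (ℕ × ℕ)) := by
    rw [Finset.coe_filter]
    exact Set.ext fun _ ↦ and_comm
  have htarget : {I : Ideal GaussianInt | I ≠ ⊥} ∩ {I | (Ideal.absNorm I : ℝ) ≤ x}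
      = (isArithmeticNorm_absNorm GaussianInt).normLE x :=
    Set.ext fun _ ↦ IsArithmeticNorm.mem_normLE.symm
  rw [hsource, htarget] at hbij
  exact (hbij.finsetCard_eq _).symm

theorem abs_card_normLE_absNorm_gaussianInt_sub_le (hx : 1 ≤ x) :
    |(((isArithmeticNorm_absNorm GaussianInt).normLE x).card : ℝ) - π / 4 * x|
      ≤ 130 * x ^ (1 / 3 : ℝ) := by
  rw [card_normLE_absNorm_gaussianInt]
  exact abs_card_filter_quarterDisc_fst_pos_sub_le hx

lemma normI_eq_absNorm (I : Ideal GaussianInt) : normI I = Ideal.absNorm I := by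
  rw [Ideal.absNorm_apply, Submodule.cardQuot_apply]
  rfl

lemma zetaQi2_eq_normZeta : zetaQi2 = normZeta (Ideal.absNorm : Ideal GaussianInt →*₀ ℕ) 2 := by
  rw [normZeta_absNorm_eq_tsum_ne_bot two_ne_zero]
  refine tsum_congr fun I ↦ ?_
  rw [normI_eq_absNorm, rpow_neg (Nat.cast_nonneg _), rpow_two, one_div]

lemma setOf_mem_P_sup_eq_top :
    {p ∈ P x | p.1 ⊔ p.2 = ⊤}
      = {p ∈ ((isArithmeticNorm_absNorm GaussianInt).normLE x : Set (Ideal GaussianInt)) ×ˢ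
          ((isArithmeticNorm_absNorm GaussianInt).normLE x : Set (Ideal GaussianInt)) |
        IsRelPrime p.1 p.2} := by
  ext p
  simp only [P, Set.mem_ofPred_eq, Set.mem_prod, Finset.mem_coe, IsArithmeticNorm.mem_normLE,
    ideal_isRelPrime_iff_sup_eq_top, normI_eq_absNorm, Ideal.zero_eq_bot]
  tauto

end GaussianIdeals

theorem coprimePairCount_asymptotic :
    ∃ C : ℝ, 0 < C ∧ ∀ x : ℝ, 1 ≤ x →
      |({p ∈ P x | p.1 ⊔ p.2 = ⊤}.ncard : ℝ) - π ^ 2 * x ^ 2 / (16 * zetaQi2)|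
        ≤ C * x ^ ((4 : ℝ) / 3) := by
  set C := (130 * (130 + 2 * |π / 4|) + (π / 4) ^ 2)
    * normZeta (Ideal.absNorm : Ideal GaussianInt →*₀ ℕ) (1 + 1 / 3)
  refine ⟨max C 1, by positivity, fun x hx ↦ ?_⟩
  have hx0 : 0 < x := one_pos.trans_le hx
  have hmain : π ^ 2 * x ^ 2 / (16 * zetaQi2)
      = (π / 4 * x) ^ 2 / normZeta (Ideal.absNorm : Ideal GaussianInt →*₀ ℕ) 2 := by
    rw [zetaQi2_eq_normZeta]
    ring
  rw [setOf_mem_P_sup_eq_top, hmain]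
  calc _ ≤ _ := (isArithmeticNorm_absNorm GaussianInt).abs_ncard_isRelPrime_sub_le (by norm_num)
        (by norm_num) (fun _ ↦ abs_card_normLE_absNorm_gaussianInt_sub_le) hx0
    _ = C * x ^ ((4 : ℝ) / 3) := by
      rw [mul_right_comm, show (4 : ℝ) / 3 = 1 + 1 / 3 by norm_num]
    _ ≤ max C 1 * x ^ ((4 : ℝ) / 3) := by gcongr; exact le_max_left C 1
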